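/- Let n ≥ 2, let 1 ≤ k ≤ n−1, and let f₁, f₂ ∈ Q₀ⁿ. Assume the Shephard condition: ‖P_H f₁‖_{L¹(H)} ≤ ‖P_H f₂‖_{L¹(H)} for every k-dimensional linear subspace H ⊆ ℝⁿ. Then ‖f₁‖_{n/k} ≤ (16·√n)^{n−k} · ‖f₂‖₁^{k/n} · ‖f₂‖_∞^{(n−k)/n}. -/

import Mathlib

open MeasureTheory

noncomputable section

/-- `ℝⁿ` with its Euclidean structure. -/
abbrev Eucl (n : ℕ) := EuclideanSpace ℝ (Fin n)

/-- `f : ℝⁿ → [0,∞)` is log-concave: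
`f(tx+(1−t)y) ≥ f(x)^t · f(y)^(1−t)` for all `x, y` and `t ∈ (0,1)`. -/
def IsLogConcave {n : ℕ} (f : Eucl n → ℝ) : Prop :=
  ∀ x y : Eucl n, ∀ t : ℝ, 0 < t → t < 1 →
    f x ^ t * f y ^ (1 - t) ≤ f (t • x + (1 - t) • y)

/-- The class `Q₀ⁿ`: nonnegative, log-concave, upper semicontinuous, integrable
functions with positive integral. -/
def MemQ0 {n : ℕ} (f : Eucl n → ℝ) : Prop :=
  (∀ x, 0 ≤ f x) ∧ IsLogConcave f ∧ UpperSemicontinuous f ∧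
    Integrable f ∧ 0 < ∫ x, f x

/-- `‖f‖_∞ = sup f`. -/
def supNorm {n : ℕ} (f : Eucl n → ℝ) : ℝ := ⨆ x, f x

/-- `‖f‖_p = (∫ f^p)^(1/p)`. -/
def lpNorm {n : ℕ} (p : ℝ) (f : Eucl n → ℝ) : ℝ := (∫ x, f x ^ p) ^ (1 / p)

/-- `‖P_H f‖_{L¹(H)} = ∫_H sup_{z ∈ H⊥} f(y+z) dλ_H(y)`, the `L¹(H)`-norm of the
projection of `f` onto the subspace `H` (with the Lebesgue measure on `H` induced
by the Euclidean structure). -/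
def projL1 {n : ℕ} (f : Eucl n → ℝ) (H : Submodule ℝ (Eucl n)) : ℝ :=
  ∫ y : H, ⨆ z : Hᗮ, f ((y : Eucl n) + (z : Eucl n))

/-- `‖S_H f‖_{L¹(H)} = ∫_H f dλ_H`, the integral of the section `f|_H`. -/
def sectL1 {n : ℕ} (f : Eucl n → ℝ) (H : Submodule ℝ (Eucl n)) : ℝ :=
  ∫ y : H, f (y : Eucl n)

/-!
By the Loomis–Whitney inequality (here a case of Finner's inequality), `‖f₁‖_{n/k}` is controlled
by the integrals of the shadows of `f₁` on the `k`-dimensional coordinate subspaces of any linear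
frame. Linear projections with the same kernel have shadow integrals that differ by a factor
independent of the function, so the hypothesis on orthogonal projections allows one to replace `f₁`
by `f₂` in all these shadows, and it remains to find a frame in which the shadows of `f₂` are small.

Take the frame `xᵢ - xᵢ'` for points of a superlevel set `{v ≤ f₂}`. By convexity this set contains
a box spanned by any `n - k` of these vectors, scaled by `1 / (n - k)`, and contracting `f₂` towards
that box bounds the complementary shadow by `∫ f₂`, as in the Rogers–Shephard inequality. The bound
is good if `det (xᵢ - xᵢ')` is large. For independent uniform points the mean of its square is
`n! 2ⁿ` times the determinant of the covariance matrix (Andréief), which a comparison with Gaussian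
integrals bounds below, up to a constant, by the square of the volume of `{v ≤ f₂}`; the layer cake
formula gives a level `v` at which that volume is almost `∫ f₂ / (2 √(v ‖f₂‖_∞))`, or larger.
-/

open scoped ENNReal

section Finner

variable {ι J : Type*} [DecidableEq ι] {X : ι → Type*} [∀ i, MeasurableSpace (X i)]
  {μ : ∀ i, Measure (X i)}

theorem dependsOn_lmarginal {G : (∀ i, X i) → ℝ≥0∞} {s : Set ι} (hG : DependsOn G s)
    (T : Finset ι) : DependsOn (∫⋯∫⁻_T, G ∂μ) s := fun x y hxy ↦
  lintegral_congr fun z ↦ hG fun i hi ↦ by simp only [Function.updateFinset, hxy i hi]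

theorem lintegral_prod_rpow_le_prod_ite_rpow {α : Type*} [MeasurableSpace α] {ν : Measure α}
    {A : Finset J} {P : J → Prop} [DecidablePred P] {p : J → ℝ} (hp0 : ∀ j ∈ A, 0 ≤ p j)
    (hp1 : ∑ j ∈ A with P j, p j = 1) {h : J → α → ℝ≥0∞} (hm : ∀ j ∈ A, Measurable (h j))
    {c : J → ℝ≥0∞} (hc : ∀ j, ¬P j → ∀ r, h j r = c j) :
    ∫⁻ r, ∏ j ∈ A, h j r ^ p j ∂ν ≤ ∏ j ∈ A, (if P j then ∫⁻ r, h j r ∂ν else c j) ^ p j := by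
  have hm' (j : J) (hj : j ∈ A.filter P) : Measurable (h j) := hm j (Finset.mem_filter.mp hj).1
  calc ∫⁻ r, ∏ j ∈ A, h j r ^ p j ∂ν
    _ = ∫⁻ r, (∏ j ∈ A with ¬P j, c j ^ p j) * ∏ j ∈ A with P j, h j r ^ p j ∂ν :=
        lintegral_congr fun r ↦ by
          rw [← Finset.prod_filter_not_mul_prod_filter A P]
          congr 1
          exact Finset.prod_congr rfl fun j hj ↦ by rw [hc j (Finset.mem_filter.mp hj).2]
    _ = (∏ j ∈ A with ¬P j, c j ^ p j) * ∫⁻ r, ∏ j ∈ A with P j, h j r ^ p j ∂ν :=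
        lintegral_const_mul _ (Finset.measurable_fun_prod _ fun j hj ↦ (hm' j hj).pow_const _)
    _ ≤ (∏ j ∈ A with ¬P j, c j ^ p j) * ∏ j ∈ A with P j, (∫⁻ r, h j r ∂ν) ^ p j := by
        gcongr
        exact ENNReal.lintegral_prod_norm_pow_le _ (fun j hj ↦ (hm' j hj).aemeasurable) hp1
          fun j hj ↦ hp0 j (Finset.mem_filter.mp hj).1
    _ = ∏ j ∈ A, (if P j then ∫⁻ r, h j r ∂ν else c j) ^ p j := by
        rw [← Finset.prod_filter_not_mul_prod_filter A P]
        congr 1 <;> exact Finset.prod_congr rfl fun j hj ↦ by simp [(Finset.mem_filter.mp hj).2]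

theorem lmarginal_prod_rpow_le [∀ i, SigmaFinite (μ i)] {A : Finset J} {S : J → Finset ι}
    {p : J → ℝ} (hp0 : ∀ j ∈ A, 0 ≤ p j) (hp1 : ∀ i, ∑ j ∈ A with i ∈ S j, p j = 1)
    {G : J → (∀ i, X i) → ℝ≥0∞} (hGm : ∀ j, Measurable (G j))
    (hG : ∀ j, DependsOn (G j) (S j : Set ι)) (T : Finset ι) (x : ∀ i, X i) :
    (∫⋯∫⁻_T, (fun x ↦ ∏ j ∈ A, G j x ^ p j) ∂μ) x ≤
      ∏ j ∈ A, (∫⋯∫⁻_(T ∩ S j), G j ∂μ) x ^ p j := by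
  induction T using Finset.induction_on generalizing x with
  | empty => simp
  | insert i T hi ih =>
    have hconst (j : J) (hj : i ∉ S j) (r : X i) :
        (∫⋯∫⁻_(T ∩ S j), G j ∂μ) (Function.update x i r) = (∫⋯∫⁻_(T ∩ S j), G j ∂μ) x :=
      dependsOn_lmarginal (hG j) _ fun l hl ↦
        Function.update_of_ne (fun h ↦ hj (by simpa [h] using hl)) _ _
    calc (∫⋯∫⁻_(insert i T), (fun x ↦ ∏ j ∈ A, G j x ^ p j) ∂μ) x
      _ = ∫⁻ r, (∫⋯∫⁻_T, (fun x ↦ ∏ j ∈ A, G j x ^ p j) ∂μ) (Function.update x i r) ∂μ i :=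
          lmarginal_insert _ (Finset.measurable_fun_prod _ fun j _ ↦ (hGm j).pow_const _) hi x
      _ ≤ ∫⁻ r, ∏ j ∈ A, (∫⋯∫⁻_(T ∩ S j), G j ∂μ) (Function.update x i r) ^ p j ∂μ i :=
          lintegral_mono fun r ↦ ih _
      _ ≤ ∏ j ∈ A, (if i ∈ S j then
            ∫⁻ r, (∫⋯∫⁻_(T ∩ S j), G j ∂μ) (Function.update x i r) ∂μ i
            else (∫⋯∫⁻_(T ∩ S j), G j ∂μ) x) ^ p j :=
          lintegral_prod_rpow_le_prod_ite_rpow hp0 (hp1 i)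
            (fun j _ ↦ ((hGm j).lmarginal μ).comp (measurable_update x)) hconst
      _ = ∏ j ∈ A, (∫⋯∫⁻_(insert i T ∩ S j), G j ∂μ) x ^ p j :=
          Finset.prod_congr rfl fun j _ ↦ by
            split_ifs with hij
            · rw [Finset.insert_inter_of_mem hij, lmarginal_insert _ (hGm j) (by simp [hi])]
            · rw [Finset.insert_inter_of_notMem hij]

theorem exists_measurable_ge_lintegral_eq {α : Type*} [MeasurableSpace α] {ν : Measure α}
    {g : α → ℝ≥0∞} (hg : AEMeasurable g ν) :
    ∃ g', Measurable g' ∧ g ≤ g' ∧ ∫⁻ x, g' x ∂ν = ∫⁻ x, g x ∂ν := by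
  classical
  obtain ⟨N, hgN, hN, hN0⟩ := exists_measurable_superset_of_null (ae_iff.mp hg.ae_eq_mk)
  refine ⟨N.piecewise ⊤ (hg.mk g), Measurable.piecewise hN measurable_const hg.measurable_mk,
    fun x ↦ ?_, lintegral_congr_ae ?_⟩
  · by_cases hx : x ∈ N
    · simp [hx]
    · simpa [hx] using (not_not.mp fun h ↦ hx (hgN h) : g x = hg.mk g x).le
  · filter_upwards [measure_eq_zero_iff_ae_notMem.mp hN0, hg.ae_eq_mk] with x hx hgx
    simp [hx, hgx]

theorem lintegral_prod_rpow_le [Fintype ι] [∀ i, SigmaFinite (μ i)] {A : Finset J}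
    {S : J → Finset ι} {p : J → ℝ} (hp0 : ∀ j ∈ A, 0 ≤ p j)
    (hp1 : ∀ i, ∑ j ∈ A with i ∈ S j, p j = 1) {g : ∀ j, (∀ i : S j, X i) → ℝ≥0∞}
    (hg : ∀ j ∈ A, AEMeasurable (g j) (.pi fun i : S j ↦ μ i)) :
    ∫⁻ x, ∏ j ∈ A, g j ((S j).restrict x) ^ p j ∂.pi μ ≤
      ∏ j ∈ A, (∫⁻ y, g j y ∂.pi fun i : S j ↦ μ i) ^ p j := by
  cases isEmpty_or_nonempty (∀ i, X i) with
  | inl h => simp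
  | inr h =>
  obtain ⟨x₀⟩ := h
  have hmaj (j : J) : ∃ g', Measurable g' ∧ (j ∈ A → g j ≤ g' ∧
      ∫⁻ y, g' y ∂.pi (fun i : S j ↦ μ i) = ∫⁻ y, g j y ∂.pi fun i : S j ↦ μ i) := by
    by_cases hj : j ∈ A
    · simpa [hj] using exists_measurable_ge_lintegral_eq (hg j hj)
    · exact ⟨0, measurable_const, fun h ↦ absurd h hj⟩
  choose g' hg'm hg' using hmaj
  calc ∫⁻ x, ∏ j ∈ A, g j ((S j).restrict x) ^ p j ∂.pi μ
    _ ≤ ∫⁻ x, ∏ j ∈ A, g' j ((S j).restrict x) ^ p j ∂.pi μ := by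
        gcongr with x j hj
        · exact hp0 j hj
        · exact (hg' j hj).1 _
    _ = (∫⋯∫⁻_Finset.univ, (fun x ↦ ∏ j ∈ A, g' j ((S j).restrict x) ^ p j) ∂μ) x₀ := by
        rw [lmarginal_univ]
    _ ≤ ∏ j ∈ A, (∫⋯∫⁻_(Finset.univ ∩ S j), (fun x ↦ g' j ((S j).restrict x)) ∂μ) x₀ ^ p j :=
        lmarginal_prod_rpow_le hp0 hp1 (fun j ↦ (hg'm j).comp (Finset.measurable_restrict _))
          (fun j x y hxy ↦ congrArg (g' j) (funext fun i ↦ hxy i i.2)) _ _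
    _ = ∏ j ∈ A, (∫⁻ y, g j y ∂.pi fun i : S j ↦ μ i) ^ p j :=
        Finset.prod_congr rfl fun j hj ↦ by
          rw [Finset.univ_inter, ← (hg' j hj).2]
          simp only [lmarginal, Function.restrict_updateFinset]

end Finner

/-- The fiberwise supremum of `F` along `π`: for a projection `π` this is the projection of the
function `F`, whose strict superlevel sets are the images of those of `F`. -/
def fiberSup {α β : Type*} (π : α → β) (F : α → ℝ≥0∞) (b : β) : ℝ≥0∞ :=
  ⨆ (x) (_ : π x = b), F x

theorem le_fiberSup {α β : Type*} (π : α → β) (F : α → ℝ≥0∞) (x : α) :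
    F x ≤ fiberSup π F (π x) :=
  le_iSup₂ (f := fun y (_ : π y = π x) ↦ F y) x rfl

theorem fiberSup_comp_surjective {α α' β : Type*} {g : α' → α} (hg : Function.Surjective g)
    (π : α → β) (F : α → ℝ≥0∞) : fiberSup (π ∘ g) (F ∘ g) = fiberSup π F :=
  funext fun b ↦ hg.iSup_comp (g := fun x ↦ ⨆ _ : π x = b, F x)

theorem fiberSup_injective_comp {α β β' : Type*} {L : β → β'} (hL : Function.Injective L)
    (π : α → β) (F : α → ℝ≥0∞) (b : β) : fiberSup (L ∘ π) F (L b) = fiberSup π F b := by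
  simp only [fiberSup, Function.comp_apply, hL.eq_iff]

section LoomisWhitney

open Finset

variable {ι : Type*} [Fintype ι]

theorem card_filter_mem_powersetCard [DecidableEq ι] (i : ι) {k : ℕ} (hk : 0 < k) :
    #{S ∈ powersetCard k univ | i ∈ S} = (Fintype.card ι - 1).choose (k - 1) := by
  simpa using card_filter_powersetCard_subset {i} univ k (subset_univ _) (by simpa)

variable {X : ι → Type*} [∀ i, MeasurableSpace (X i)] {μ : ∀ i, Measure (X i)}
  [∀ i, SigmaFinite (μ i)]

theorem lintegral_rpow_le_of_lintegral_fiberSup_restrict_le {k : ℕ} (hk : 0 < k)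
    (hkι : k ≤ Fintype.card ι) {F : (∀ i, X i) → ℝ≥0∞} {T : ℝ≥0∞}
    (hF : ∀ S : Finset ι, #S = k →
      AEMeasurable (fiberSup S.restrict F) (.pi fun i : S ↦ μ i))
    (hT : ∀ S : Finset ι, #S = k →
      ∫⁻ y, fiberSup S.restrict F y ∂.pi (fun i : S ↦ μ i) ≤ T) :
    ∫⁻ x, F x ^ ((Fintype.card ι : ℝ) / k) ∂.pi μ ≤ T ^ ((Fintype.card ι : ℝ) / k) := by
  classical
  set n := Fintype.card ι
  set p : ℝ := ((n - 1).choose (k - 1) : ℝ)⁻¹ with hp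
  have hchoose : 0 < (n - 1).choose (k - 1) := Nat.choose_pos (by omega)
  have hexp : p * #(powersetCard k (univ : Finset ι)) = (n : ℝ) / k := by
    have := Nat.add_one_mul_choose_eq (n - 1) (k - 1)
    rw [Nat.sub_add_cancel hk, Nat.sub_add_cancel (hk.trans_le hkι)] at this
    rw [card_powersetCard, card_univ, hp, inv_mul_eq_div, div_eq_div_iff (by positivity)
      (by positivity)]
    exact_mod_cast this.symm
  have hpow (a : ℝ≥0∞) : ∏ _S ∈ powersetCard k (univ : Finset ι), a ^ p = a ^ ((n : ℝ) / k) := by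
    rw [prod_const, ← ENNReal.rpow_natCast, ← ENNReal.rpow_mul, hexp]
  simp only [← hpow]
  calc ∫⁻ x, ∏ _S ∈ powersetCard k univ, F x ^ p ∂.pi μ
    _ ≤ ∫⁻ x, ∏ S ∈ powersetCard k univ, fiberSup S.restrict F (S.restrict x) ^ p ∂.pi μ := by
        gcongr
        exact le_fiberSup _ F _
    _ ≤ ∏ S ∈ powersetCard k univ,
          (∫⁻ y, fiberSup S.restrict F y ∂.pi fun i : S ↦ μ i) ^ p := by
        refine lintegral_prod_rpow_le (S := fun S ↦ S) (fun _ _ ↦ by positivity) (fun i ↦ ?_)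
          fun S hS ↦ hF S (mem_powersetCard.mp hS).2
        rw [sum_const, card_filter_mem_powersetCard i hk, nsmul_eq_mul, hp,
          mul_inv_cancel₀ (by positivity)]
    _ ≤ ∏ _S ∈ powersetCard k (univ : Finset ι), T ^ p := by
        gcongr with S hS
        exact hT S (mem_powersetCard.mp hS).2

end LoomisWhitney

section RogersShephard

theorem lintegral_comp_smul_add {E : Type*} [NormedAddCommGroup E] [NormedSpace ℝ E]
    [MeasurableSpace E] [BorelSpace E] [FiniteDimensional ℝ E] (μ : Measure E)
    [μ.IsAddHaarMeasure] (h : E → ℝ≥0∞) {s : ℝ} (hs : 0 < s) (q : E) :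
    ENNReal.ofReal (s ^ Module.finrank ℝ E) * ∫⁻ y, h (s • y + q) ∂μ = ∫⁻ y, h y ∂μ := by
  have hmap : ∫⁻ y, h (s • y + q) ∂μ = ∫⁻ y, h (y + q) ∂μ.map (s • ·) :=
    (lintegral_map_equiv (fun y ↦ h (y + q))
      (Homeomorph.smulOfNeZero s hs.ne').toMeasurableEquiv).symm
  rw [hmap, Measure.map_addHaar_smul _ hs.ne', lintegral_smul_measure, smul_eq_mul, ← mul_assoc,
    ← ENNReal.ofReal_mul (by positivity), abs_of_pos (by positivity),
    mul_inv_cancel₀ (by positivity), ENNReal.ofReal_one, one_mul, lintegral_add_right_eq_self h q]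

theorem lintegral_fiberSup_fst_le {E₁ E₂ : Type*} [NormedAddCommGroup E₁] [NormedSpace ℝ E₁]
    [MeasurableSpace E₁] [BorelSpace E₁] [FiniteDimensional ℝ E₁] [NormedAddCommGroup E₂]
    [NormedSpace ℝ E₂] [MeasurableSpace E₂] [BorelSpace E₂] [FiniteDimensional ℝ E₂]
    (μ₁ : Measure E₁) (μ₂ : Measure E₂) [μ₁.IsAddHaarMeasure] [μ₂.IsAddHaarMeasure]
    {F : E₁ × E₂ → ℝ≥0∞} (hF : AEMeasurable F (μ₁.prod μ₂)) {t : ℝ} (ht0 : 0 < t) (ht1 : t < 1)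
    {C : ℝ≥0∞} {p : E₁ × E₂} {B : Set E₂} (hB : MeasurableSet B)
    (hFB : ∀ x, ∀ w ∈ B, C * F x ≤ F ((1 - t) • x + t • (p + (0, w)))) :
    C * (ENNReal.ofReal ((1 - t) ^ Module.finrank ℝ E₁ * t ^ Module.finrank ℝ E₂) * μ₂ B) *
      ∫⁻ y, fiberSup Prod.fst F y ∂μ₁ ≤ ∫⁻ x, F x ∂μ₁.prod μ₂ := by
  have hslice (x : E₁ × E₂) : C * (ENNReal.ofReal (t ^ Module.finrank ℝ E₂) * μ₂ B) * F x ≤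
      ∫⁻ z, F ((1 - t) • x.1 + t • p.1, z) ∂μ₂ :=
    calc C * (ENNReal.ofReal (t ^ Module.finrank ℝ E₂) * μ₂ B) * F x
      _ = ENNReal.ofReal (t ^ Module.finrank ℝ E₂) * ∫⁻ _ in B, C * F x ∂μ₂ := by
          rw [setLIntegral_const]; ring
      _ ≤ ENNReal.ofReal (t ^ Module.finrank ℝ E₂) *
            ∫⁻ w in B, F ((1 - t) • x.1 + t • p.1, t • w + ((1 - t) • x.2 + t • p.2)) ∂μ₂ := by
          gcongr 1
          refine setLIntegral_mono' hB fun w hw ↦ (hFB x w hw).trans_eq (congrArg F ?_)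
          ext <;> simp [add_comm, add_left_comm]
      _ ≤ ENNReal.ofReal (t ^ Module.finrank ℝ E₂) *
            ∫⁻ w, F ((1 - t) • x.1 + t • p.1, t • w + ((1 - t) • x.2 + t • p.2)) ∂μ₂ := by
          gcongr; exact Measure.restrict_le_self
      _ = ∫⁻ z, F ((1 - t) • x.1 + t • p.1, z) ∂μ₂ :=
          lintegral_comp_smul_add μ₂ (fun z ↦ F ((1 - t) • x.1 + t • p.1, z)) ht0 _
  calc C * (ENNReal.ofReal ((1 - t) ^ Module.finrank ℝ E₁ * t ^ Module.finrank ℝ E₂) * μ₂ B) *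
        ∫⁻ y, fiberSup Prod.fst F y ∂μ₁
    _ ≤ ENNReal.ofReal ((1 - t) ^ Module.finrank ℝ E₁) * ∫⁻ y,
          C * (ENNReal.ofReal (t ^ Module.finrank ℝ E₂) * μ₂ B) * fiberSup Prod.fst F y ∂μ₁ := by
        refine le_of_eq_of_le ?_ (mul_le_mul_right (lintegral_const_mul_le _ _) _)
        rw [ENNReal.ofReal_mul (pow_nonneg (by linarith) _)]
        ring
    _ ≤ ENNReal.ofReal ((1 - t) ^ Module.finrank ℝ E₁) *
          ∫⁻ y, ∫⁻ z, F ((1 - t) • y + t • p.1, z) ∂μ₂ ∂μ₁ := by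
        gcongr with y
        simp only [fiberSup, ENNReal.mul_iSup]
        exact iSup₂_le fun x hx ↦ hx ▸ hslice x
    _ = ∫⁻ y, ∫⁻ z, F (y, z) ∂μ₂ ∂μ₁ :=
        lintegral_comp_smul_add μ₁ (fun y ↦ ∫⁻ z, F (y, z) ∂μ₂) (by linarith) _
    _ = ∫⁻ x, F x ∂μ₁.prod μ₂ := (lintegral_prod F hF).symm

theorem lintegral_fiberSup_restrict_le {ι : Type*} [Fintype ι] [DecidableEq ι] (S : Finset ι)
    {F : (ι → ℝ) → ℝ≥0∞} (hF : AEMeasurable F) {t : ℝ} (ht0 : 0 < t) (ht1 : t < 1) {δ : ℝ}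
    (hδ : 0 ≤ δ) {C : ℝ≥0∞} {p : ι → ℝ}
    (hFδ : ∀ x, ∀ w ∈ Set.Icc 0 (S.piecewise (0 : ι → ℝ) fun _ ↦ δ),
      C * F x ≤ F ((1 - t) • x + t • (p + w))) :
    C * ENNReal.ofReal ((1 - t) ^ S.card * (t * δ) ^ Sᶜ.card) *
      ∫⁻ y, fiberSup S.restrict F y ≤ ∫⁻ x, F x := by
  let e := MeasurableEquiv.piEquivPiSubtypeProd (fun _ : ι ↦ ℝ) (· ∈ S)
  have he : MeasurePreserving e.symm := by
    convert (volume_preserving_piEquivPiSubtypeProd (fun _ : ι ↦ ℝ) (· ∈ S)).symm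
  have hsup : fiberSup Prod.fst (F ∘ e.symm) = fiberSup S.restrict F := by
    rw [← fiberSup_comp_surjective e.symm.surjective S.restrict F]
    congr 1
    ext x i
    simp [e]
  have hbox (w : {i // i ∉ S} → ℝ) (hw : w ∈ Set.Icc 0 fun _ ↦ δ) :
      e.symm (0, w) ∈ Set.Icc 0 (S.piecewise (0 : ι → ℝ) fun _ ↦ δ) := by
    simp only [Set.mem_Icc, Pi.le_def, ← forall_and] at hw ⊢
    intro i
    by_cases hi : i ∈ S
    · simp [e, hi]
    · simpa [e, hi] using hw ⟨i, hi⟩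
  have hadd (x p : ({i // i ∈ S} → ℝ) × ({i // i ∉ S} → ℝ)) (w : {i // i ∉ S} → ℝ) :
      e.symm ((1 - t) • x + t • (p + (0, w))) =
        (1 - t) • e.symm x + t • (e.symm p + e.symm (0, w)) := by
    ext i
    by_cases hi : i ∈ S <;> simp [e, hi]
  have hvol : ENNReal.ofReal (t ^ Module.finrank ℝ ({i // i ∉ S} → ℝ)) *
      volume (Set.Icc (0 : {i // i ∉ S} → ℝ) fun _ ↦ δ) = ENNReal.ofReal ((t * δ) ^ Sᶜ.card) := by
    simp [Real.volume_Icc_pi, Fintype.card_subtype_compl, Finset.card_compl, mul_pow,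
      ENNReal.ofReal_mul, ENNReal.ofReal_pow, ht0.le, hδ]
  have key := lintegral_fiberSup_fst_le volume volume
    (hF.comp_quasiMeasurePreserving he.quasiMeasurePreserving) ht0 ht1 (C := C) (p := e p)
    (measurableSet_Icc (a := 0) (b := fun _ ↦ δ)) fun x w hw ↦ by
      rw [Function.comp_apply, Function.comp_apply, hadd, e.symm_apply_apply]
      exact hFδ (e.symm x) _ (hbox w hw)
  rw [hsup, ENNReal.ofReal_mul (pow_nonneg (by linarith) _), mul_assoc (ENNReal.ofReal _), hvol,
    ← ENNReal.ofReal_mul (pow_nonneg (by linarith) _), Module.finrank_fintype_fun_eq_card,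
    Fintype.card_coe] at key
  exact key.trans_eq (he.lintegral_comp_emb e.symm.measurableEmbedding F)

end RogersShephard

section Projection

theorem quasiconcaveOn_fiberSup {E B : Type*} [AddCommGroup E] [Module ℝ E] [AddCommGroup B]
    [Module ℝ B] (π : E →ₗ[ℝ] B) {F : E → ℝ≥0∞} (hF : QuasiconcaveOn ℝ Set.univ F) :
    QuasiconcaveOn ℝ Set.univ (fiberSup π F) := by
  refine quasiconcaveOn_iff_min_le.mpr ⟨convex_univ, fun b _ b' _ s t hs ht hst ↦ ?_⟩
  refine le_of_forall_lt fun r hr ↦ ?_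
  simp only [lt_min_iff, fiberSup, lt_iSup_iff] at hr
  obtain ⟨⟨x, rfl, hx⟩, x', rfl, hx'⟩ := hr
  calc r < min (F x) (F x') := lt_min hx hx'
    _ ≤ F (s • x + t • x') :=
        (quasiconcaveOn_iff_min_le.mp hF).2 (Set.mem_univ x) (Set.mem_univ x') hs ht hst
    _ ≤ fiberSup π F (s • π x + t • π x') := by simpa using le_fiberSup π F (s • x + t • x')

theorem aemeasurable_of_quasiconcaveOn {E β : Type*} [NormedAddCommGroup E] [NormedSpace ℝ E]
    [FiniteDimensional ℝ E] [MeasurableSpace E] [BorelSpace E] (μ : Measure E)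
    [μ.IsAddHaarMeasure] [LinearOrder β] [TopologicalSpace β] [OrderTopology β]
    [SecondCountableTopology β] [Nonempty β] [MeasurableSpace β] [BorelSpace β] {F : E → β}
    (hF : QuasiconcaveOn ℝ Set.univ F) : AEMeasurable F μ := by
  have : NullMeasurable F μ := measurable_of_Ioi (δ := NullMeasurableSpace E μ) fun c ↦ by
    have := (hF.convex_gt c).nullMeasurableSet μ
    simpa only [Set.mem_univ, true_and] using! this
  exact this.aemeasurable

theorem exists_lintegral_comp_linearEquiv_eq {B₁ B₂ : Type*} [NormedAddCommGroup B₁]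
    [NormedSpace ℝ B₁] [FiniteDimensional ℝ B₁] [MeasurableSpace B₁] [BorelSpace B₁]
    [NormedAddCommGroup B₂] [NormedSpace ℝ B₂] [FiniteDimensional ℝ B₂] [MeasurableSpace B₂]
    [BorelSpace B₂] (μ₁ : Measure B₁) [μ₁.IsAddHaarMeasure] (μ₂ : Measure B₂)
    [μ₂.IsAddHaarMeasure] (L : B₁ ≃ₗ[ℝ] B₂) :
    ∃ c : NNReal, ∀ g : B₂ → ℝ≥0∞, ∫⁻ b, g (L b) ∂μ₁ = c * ∫⁻ b, g b ∂μ₂ := by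
  let L' := L.toContinuousLinearEquiv
  have : (μ₁.map L').IsAddHaarMeasure := L'.isAddHaarMeasure_map μ₁
  refine ⟨(μ₁.map L').addHaarScalarFactor μ₂, fun g ↦ ?_⟩
  calc ∫⁻ b, g (L b) ∂μ₁
    _ = ∫⁻ b, g b ∂μ₁.map L' := (lintegral_map_equiv g L'.toHomeomorph.toMeasurableEquiv).symm
    _ = (μ₁.map L').addHaarScalarFactor μ₂ * ∫⁻ b, g b ∂μ₂ := by
        conv_lhs => rw [Measure.isAddLeftInvariant_eq_smul (μ₁.map L') μ₂]
        exact lintegral_smul_measure ..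

theorem exists_lintegral_fiberSup_eq_of_ker_eq {E B₁ B₂ : Type*} [AddCommGroup E] [Module ℝ E]
    [NormedAddCommGroup B₁] [NormedSpace ℝ B₁] [FiniteDimensional ℝ B₁] [MeasurableSpace B₁]
    [BorelSpace B₁] [NormedAddCommGroup B₂] [NormedSpace ℝ B₂] [FiniteDimensional ℝ B₂]
    [MeasurableSpace B₂] [BorelSpace B₂] (μ₁ : Measure B₁) [μ₁.IsAddHaarMeasure]
    (μ₂ : Measure B₂) [μ₂.IsAddHaarMeasure] {π₁ : E →ₗ[ℝ] B₁} {π₂ : E →ₗ[ℝ] B₂}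
    (h₁ : Function.Surjective π₁) (h₂ : Function.Surjective π₂)
    (hker : LinearMap.ker π₁ = LinearMap.ker π₂) :
    ∃ c : NNReal,
      ∀ F : E → ℝ≥0∞, ∫⁻ b, fiberSup π₁ F b ∂μ₁ = c * ∫⁻ b, fiberSup π₂ F b ∂μ₂ := by
  let L : B₁ ≃ₗ[ℝ] B₂ := (π₁.quotKerEquivOfSurjective h₁).symm ≪≫ₗ
    Submodule.quotEquivOfEq _ _ hker ≪≫ₗ π₂.quotKerEquivOfSurjective h₂
  have hL : π₂ = L ∘ π₁ := by
    ext x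
    have : (π₁.quotKerEquivOfSurjective h₁).symm (π₁ x) = Submodule.Quotient.mk x :=
      (LinearEquiv.symm_apply_eq _).mpr rfl
    simp only [Function.comp_apply, L, LinearEquiv.trans_apply, this]
    rfl
  obtain ⟨c, h⟩ := exists_lintegral_comp_linearEquiv_eq μ₁ μ₂ L
  refine ⟨c, fun F ↦ ?_⟩
  rw [← h, hL]
  exact lintegral_congr fun b ↦ (fiberSup_injective_comp L.injective π₁ F b).symm

theorem lintegral_fiberSup_le_of_forall_finrank_eq {E B : Type*} [NormedAddCommGroup E]
    [InnerProductSpace ℝ E] [FiniteDimensional ℝ E] [MeasurableSpace E] [BorelSpace E]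
    [NormedAddCommGroup B] [NormedSpace ℝ B] [FiniteDimensional ℝ B] [MeasurableSpace B]
    [BorelSpace B] (μ : Measure B) [μ.IsAddHaarMeasure] {π : E →ₗ[ℝ] B}
    (hπ : Function.Surjective π) {F₁ F₂ : E → ℝ≥0∞}
    (hF₁ : ∫⁻ b, fiberSup π F₁ b ∂μ ≠ ∞)
    (hF : ∀ H : Submodule ℝ E, Module.finrank ℝ H = Module.finrank ℝ B →
      (∫⁻ y, fiberSup H.orthogonalProjectionOnto F₁ y).toReal ≤
        (∫⁻ y, fiberSup H.orthogonalProjectionOnto F₂ y).toReal) :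
    ∫⁻ b, fiberSup π F₁ b ∂μ ≤ ∫⁻ b, fiberSup π F₂ b ∂μ := by
  let H := (LinearMap.ker π)ᗮ
  have hsurj : Function.Surjective H.orthogonalProjectionOnto.toLinearMap := fun y ↦
    ⟨y, H.orthogonalProjectionOnto_mem_subspace_eq_self y⟩
  have hker : LinearMap.ker π = LinearMap.ker H.orthogonalProjectionOnto.toLinearMap := by
    simp [H]
  have hfinrank : Module.finrank ℝ H = Module.finrank ℝ B := by
    have h₁ := (LinearMap.ker π).finrank_add_finrank_orthogonal
    have h₂ := π.finrank_range_add_finrank_ker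
    rw [LinearMap.range_eq_top.mpr hπ, finrank_top] at h₂
    simp only [H]
    omega
  obtain ⟨c, h⟩ := exists_lintegral_fiberSup_eq_of_ker_eq μ volume hπ hsurj hker
  calc ∫⁻ b, fiberSup π F₁ b ∂μ
    _ = ENNReal.ofReal (∫⁻ b, fiberSup π F₁ b ∂μ).toReal := (ENNReal.ofReal_toReal hF₁).symm
    _ ≤ ENNReal.ofReal (∫⁻ b, fiberSup π F₂ b ∂μ).toReal := by
        rw [h, h, ENNReal.toReal_mul, ENNReal.toReal_mul]
        exact ENNReal.ofReal_le_ofReal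
          (mul_le_mul_of_nonneg_left (hF H hfinrank) ENNReal.toReal_nonneg)
    _ ≤ ∫⁻ b, fiberSup π F₂ b ∂μ := ENNReal.ofReal_toReal_le

end Projection

section IsLogConcave

variable {n : ℕ} {f : Eucl n → ℝ}

theorem IsLogConcave.quasiconcaveOn (hf : IsLogConcave f) (hf0 : ∀ x, 0 ≤ f x) :
    QuasiconcaveOn ℝ Set.univ f := by
  refine quasiconcaveOn_iff_min_le.mpr ⟨convex_univ, fun x _ y _ a b ha hb hab ↦ ?_⟩
  obtain rfl : b = 1 - a := by linarith
  rcases ha.eq_or_lt with rfl | ha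
  · simp
  rcases hb.eq_or_lt with hb | hb
  · obtain rfl : a = 1 := by linarith
    simp
  have hmin : 0 ≤ min (f x) (f y) := le_min (hf0 x) (hf0 y)
  calc min (f x) (f y) = min (f x) (f y) ^ a * min (f x) (f y) ^ (1 - a) := by
        rw [← Real.rpow_add_of_nonneg hmin ha.le hb.le, add_sub_cancel, Real.rpow_one]
    _ ≤ f x ^ a * f y ^ (1 - a) := by
        gcongr
        · exact Real.rpow_nonneg (hf0 x) a
        · exact min_le_left _ _
        · exact min_le_right _ _
    _ ≤ f (a • x + (1 - a) • y) := hf x y a ha (by linarith)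

theorem IsLogConcave.div_rpow_mul_le (hf : IsLogConcave f) (hf0 : ∀ x, 0 ≤ f x) {M : ℝ}
    (hM : ∀ x, f x ≤ M) {v : ℝ} (hv : 0 ≤ v) {q : Eucl n} (hq : v ≤ f q) {t : ℝ} (ht0 : 0 < t)
    (ht1 : t < 1) (x : Eucl n) : (v / M) ^ t * f x ≤ f ((1 - t) • x + t • q) := by
  have hM0 : 0 ≤ M := hv.trans (hq.trans (hM q))
  have hfx := Real.rpow_nonneg (hf0 x) (1 - t)
  calc (v / M) ^ t * f x = f x ^ (1 - t) * (v / M * f x) ^ t := by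
        rw [Real.mul_rpow (by positivity) (hf0 x), mul_left_comm,
          ← Real.rpow_add_of_nonneg (hf0 x) (by linarith) ht0.le, sub_add_cancel, Real.rpow_one]
    _ ≤ f x ^ (1 - t) * f q ^ t := by
        gcongr
        · exact mul_nonneg (by positivity) (hf0 x)
        · calc v / M * f x ≤ v / M * M := by gcongr; exact hM x
            _ = v := div_mul_cancel_of_imp fun hM0 ↦ le_antisymm (hM0 ▸ hq.trans (hM q)) hv
            _ ≤ f q := hq
    _ ≤ f ((1 - t) • x + t • q) := by
        simpa using hf x q (1 - t) (by linarith) (by linarith)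

end IsLogConcave

theorem exists_measure_le_pos_of_integral_pos {α : Type*} [MeasurableSpace α] {μ : Measure α}
    {f : α → ℝ} (hf : 0 < ∫ x, f x ∂μ) : ∃ ε, 0 < ε ∧ 0 < μ {x | ε ≤ f x} := by
  have hunion : μ (⋃ j : ℕ, {x | 1 / ((j : ℝ) + 1) ≤ f x}) ≠ 0 := fun h ↦ by
    refine hf.not_ge (integral_nonpos_of_ae ?_)
    filter_upwards [measure_eq_zero_iff_ae_notMem.mp h] with x hx
    by_contra! hfx
    obtain ⟨j, hj⟩ := exists_nat_one_div_lt hfx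
    exact hx (Set.mem_iUnion.mpr ⟨j, hj.le⟩)
  obtain ⟨j, hj⟩ := exists_measure_pos_of_not_measure_iUnion_null hunion
  exact ⟨1 / (j + 1), Nat.one_div_pos_of_nat, hj⟩

theorem nonempty_interior_of_convex_of_measure_ne_zero {E : Type*} [NormedAddCommGroup E]
    [NormedSpace ℝ E] [FiniteDimensional ℝ E] [MeasurableSpace E] [BorelSpace E] (μ : Measure E)
    [μ.IsAddHaarMeasure] {K : Set E} (hK : Convex ℝ K) (hμK : μ K ≠ 0) :
    (interior K).Nonempty := by
  by_contra! h
  refine hμK (measure_mono_null (fun x hx ↦ ?_) (hK.addHaar_frontier μ))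
  rw [frontier, h, Set.sdiff_empty]
  exact subset_closure hx

theorem fiberSup_orthogonalProjectionOnto {E : Type*} [NormedAddCommGroup E]
    [InnerProductSpace ℝ E] (H : Submodule ℝ E) [H.HasOrthogonalProjection] (F : E → ℝ≥0∞)
    (y : H) : fiberSup H.orthogonalProjectionOnto F y = ⨆ z : Hᗮ, F (y + z) := by
  refine le_antisymm (iSup₂_le fun x hx ↦ ?_) (iSup_le fun z ↦ ?_)
  · have hz : x - y ∈ Hᗮ := hx ▸ H.sub_starProjection_mem_orthogonal x
    simpa using le_iSup (fun z : Hᗮ ↦ F (y + z)) ⟨x - y, hz⟩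
  · have hy : H.orthogonalProjectionOnto (y + z : E) = y := by simp
    exact (le_fiberSup H.orthogonalProjectionOnto F (y + z)).trans_eq (congrArg _ hy)

/-- The class `Q₀ⁿ` without upper semicontinuity, which for log-concave functions matters only for
measurability, and log-concave functions are almost everywhere measurable anyway. -/
structure IsIntegrableLogConcave {n : ℕ} (f : Eucl n → ℝ) : Prop where
  nonneg : ∀ x, 0 ≤ f x
  logConcave : IsLogConcave f
  integrable : Integrable f
  integral_pos : 0 < ∫ x, f x

theorem MemQ0.isIntegrableLogConcave {n : ℕ} {f : Eucl n → ℝ} (hf : MemQ0 f) :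
    IsIntegrableLogConcave f :=
  ⟨hf.1, hf.2.1, hf.2.2.2.1, hf.2.2.2.2⟩

namespace IsIntegrableLogConcave

variable {n : ℕ} {f : Eucl n → ℝ}

theorem quasiconcaveOn (hf : IsIntegrableLogConcave f) : QuasiconcaveOn ℝ Set.univ f :=
  hf.logConcave.quasiconcaveOn hf.nonneg

theorem quasiconcaveOn_ofReal (hf : IsIntegrableLogConcave f) :
    QuasiconcaveOn ℝ Set.univ fun x ↦ ENNReal.ofReal (f x) :=
  hf.quasiconcaveOn.monotone_comp (g := ENNReal.ofReal) fun _ _ ↦ ENNReal.ofReal_le_ofReal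

theorem bddAbove_range (hf : IsIntegrableLogConcave f) : BddAbove (Set.range f) := by
  obtain ⟨ε, hε, hG⟩ := exists_measure_le_pos_of_integral_pos hf.integral_pos
  have hGreal : 0 < volume.real {y | ε ≤ f y} :=
    ENNReal.toReal_pos hG.ne' (hf.integrable.measure_ge_lt_top hε).ne
  suffices h : ∀ x, √(f x * ε) * volume.real {y | ε ≤ f y} ≤ 2 ^ n * ∫ y, f y by
    refine ⟨(2 ^ n * (∫ y, f y) / volume.real {y | ε ≤ f y}) ^ 2 / ε, ?_⟩
    rintro _ ⟨x, rfl⟩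
    exact (le_div_iff₀ hε).mpr (Real.sqrt_le_iff.mp ((le_div_iff₀ hGreal).mpr (h x))).2
  intro x
  have hmid (y : Eucl n) (hy : ε ≤ f y) : √(f x * ε) ≤ f ((1 / 2 : ℝ) • x + (1 / 2 : ℝ) • y) := by
    have := hf.logConcave x y (1 / 2) (by norm_num) (by norm_num)
    rw [show (1 : ℝ) - 1 / 2 = 1 / 2 by norm_num, ← Real.mul_rpow (hf.nonneg x) (hf.nonneg y),
      ← Real.sqrt_eq_rpow] at this
    exact (Real.sqrt_le_sqrt (mul_le_mul_of_nonneg_left hy (hf.nonneg x))).trans this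
  have hint : Integrable fun y ↦ f ((1 / 2 : ℝ) • x + (1 / 2 : ℝ) • y) :=
    (hf.integrable.comp_add_left _).comp_smul (by norm_num)
  have hscale : ∫ y, f ((1 / 2 : ℝ) • x + (1 / 2 : ℝ) • y) = 2 ^ n * ∫ y, f y := by
    rw [Measure.integral_comp_smul volume (fun z ↦ f ((1 / 2 : ℝ) • x + z)),
      integral_add_left_eq_self]
    simp
  rcases (Real.sqrt_nonneg (f x * ε)).eq_or_lt with h0 | h0
  · rw [← h0, zero_mul]
    exact mul_nonneg (by positivity) hf.integral_pos.le
  calc √(f x * ε) * volume.real {y | ε ≤ f y}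
    _ ≤ √(f x * ε) *
          volume.real {y | √(f x * ε) ≤ f ((1 / 2 : ℝ) • x + (1 / 2 : ℝ) • y)} :=
        mul_le_mul_of_nonneg_left
          (measureReal_mono hmid (hint.measure_ge_lt_top h0).ne) h0.le
    _ ≤ ∫ y, f ((1 / 2 : ℝ) • x + (1 / 2 : ℝ) • y) :=
        mul_meas_ge_le_integral_of_nonneg (.of_forall fun _ ↦ hf.nonneg _) hint _
    _ = 2 ^ n * ∫ y, f y := hscale

theorem le_supNorm (hf : IsIntegrableLogConcave f) (x : Eucl n) : f x ≤ supNorm f :=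
  le_ciSup hf.bddAbove_range x

theorem supNorm_pos (hf : IsIntegrableLogConcave f) : 0 < supNorm f := by
  by_contra! h
  exact hf.integral_pos.not_ge (integral_nonpos fun x ↦ (hf.le_supNorm x).trans h)

theorem lintegral_ofReal (hf : IsIntegrableLogConcave f) :
    ∫⁻ x, ENNReal.ofReal (f x) = ENNReal.ofReal (∫ x, f x) :=
  (ofReal_integral_eq_lintegral_ofReal hf.integrable (.of_forall hf.nonneg)).symm

theorem convex_superlevel (hf : IsIntegrableLogConcave f) (v : ℝ) : Convex ℝ {x | v ≤ f x} := by
  simpa using hf.quasiconcaveOn v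

theorem exists_eventually_le (hf : IsIntegrableLogConcave f) :
    ∃ p v, 0 < v ∧ ∀ᶠ z in nhds p, v ≤ f z := by
  obtain ⟨ε, hε, hμ⟩ := exists_measure_le_pos_of_integral_pos hf.integral_pos
  obtain ⟨p, hp⟩ := nonempty_interior_of_convex_of_measure_ne_zero volume
    (hf.convex_superlevel ε) hμ.ne'
  exact ⟨p, ε, hε, mem_interior_iff_mem_nhds.mp hp⟩

theorem projL1_eq (hf : IsIntegrableLogConcave f) (H : Submodule ℝ (Eucl n)) :
    projL1 f H =
      (∫⁻ y, fiberSup H.orthogonalProjectionOnto (fun x ↦ ENNReal.ofReal (f x)) y).toReal := by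
  have hsup (y : H) : ⨆ z : Hᗮ, f (y + z) =
      (fiberSup H.orthogonalProjectionOnto (fun x ↦ ENNReal.ofReal (f x)) y).toReal := by
    rw [fiberSup_orthogonalProjectionOnto, ENNReal.toReal_iSup fun _ ↦ ENNReal.ofReal_ne_top]
    simp only [ENNReal.toReal_ofReal (hf.nonneg _)]
  simp only [projL1, hsup]
  refine integral_toReal (aemeasurable_of_quasiconcaveOn _
    (quasiconcaveOn_fiberSup H.orthogonalProjectionOnto.toLinearMap hf.quasiconcaveOn_ofReal))
    (.of_forall fun y ↦ ?_)
  calc fiberSup H.orthogonalProjectionOnto (fun x ↦ ENNReal.ofReal (f x)) y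
    _ ≤ ENNReal.ofReal (supNorm f) :=
        iSup₂_le fun x _ ↦ ENNReal.ofReal_le_ofReal (hf.le_supNorm x)
    _ < ∞ := ENNReal.ofReal_lt_top

end IsIntegrableLogConcave

section Comparison

variable {n : ℕ} {ι : Type*} {f : Eucl n → ℝ}

theorem IsIntegrableLogConcave.quasiconcaveOn_ofReal_comp (hf : IsIntegrableLogConcave f)
    (V : (ι → ℝ) →ₗ[ℝ] Eucl n) : QuasiconcaveOn ℝ Set.univ fun w ↦ ENNReal.ofReal (f (V w)) :=
  fun r ↦ by simpa using (hf.quasiconcaveOn_ofReal r).linear_preimage V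

theorem IsIntegrableLogConcave.aemeasurable_ofReal_comp [Fintype ι]
    (hf : IsIntegrableLogConcave f) (V : (ι → ℝ) →ₗ[ℝ] Eucl n) :
    AEMeasurable fun w ↦ ENNReal.ofReal (f (V w)) :=
  aemeasurable_of_quasiconcaveOn volume (hf.quasiconcaveOn_ofReal_comp V)

theorem IsIntegrableLogConcave.lintegral_fiberSup_restrict_le [Fintype ι] [DecidableEq ι]
    (hf : IsIntegrableLogConcave f) (V : (ι → ℝ) →ₗ[ℝ] Eucl n) (S : Finset ι) {t δ v : ℝ}
    (ht0 : 0 < t) (ht1 : t < 1) (hδ : 0 ≤ δ) (hv : 0 ≤ v) {p : ι → ℝ}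
    (hp : ∀ w ∈ Set.Icc 0 (S.piecewise (0 : ι → ℝ) fun _ ↦ δ), v ≤ f (V (p + w))) :
    ENNReal.ofReal ((v / supNorm f) ^ t * ((1 - t) ^ S.card * (t * δ) ^ Sᶜ.card)) *
        ∫⁻ y, fiberSup S.restrict (fun w ↦ ENNReal.ofReal (f (V w))) y ≤
      ∫⁻ w, ENNReal.ofReal (f (V w)) := by
  have hvt : 0 ≤ (v / supNorm f) ^ t := Real.rpow_nonneg (div_nonneg hv hf.supNorm_pos.le) t
  rw [ENNReal.ofReal_mul hvt]
  refine _root_.lintegral_fiberSup_restrict_le S (p := p) (hf.aemeasurable_ofReal_comp V)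
    ht0 ht1 hδ fun x w hw ↦ ?_
  rw [← ENNReal.ofReal_mul hvt, map_add, map_smul, map_smul]
  exact ENNReal.ofReal_le_ofReal
    (hf.logConcave.div_rpow_mul_le hf.nonneg hf.le_supNorm hv (hp w hw) ht0 ht1 (V x))

theorem IsIntegrableLogConcave.lintegral_fiberSup_restrict_ne_top [Finite ι]
    (hf : IsIntegrableLogConcave f) (V : (ι → ℝ) ≃ₗ[ℝ] Eucl n) (S : Finset ι) :
    ∫⁻ y, fiberSup S.restrict (fun w ↦ ENNReal.ofReal (f (V w))) y ≠ ∞ := by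
  classical
  have := Fintype.ofFinite ι
  obtain ⟨p, v, hv, hpv⟩ := hf.exists_eventually_le
  have hV : Filter.Tendsto (fun w ↦ V (V.symm p + w)) (nhds 0) (nhds p) :=
    (V.toContinuousLinearEquiv.continuous.comp (continuous_const_add _)).tendsto' _ _ (by simp)
  obtain ⟨δ, hδ, hball⟩ := Metric.nhds_basis_closedBall.mem_iff.mp (hV hpv)
  have hbox (w : ι → ℝ) (hw : w ∈ Set.Icc 0 (S.piecewise (0 : ι → ℝ) fun _ ↦ δ)) :
      v ≤ f (V (V.symm p + w)) := by
    refine hball (mem_closedBall_zero_iff.mpr ((pi_norm_le_iff_of_nonneg hδ.le).mpr fun i ↦ ?_))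
    rw [Real.norm_of_nonneg (hw.1 i)]
    refine (hw.2 i).trans ?_
    by_cases hi : i ∈ S <;> simp [hi, hδ.le]
  have hle := hf.lintegral_fiberSup_restrict_le V.toLinearMap S (t := 1 / 2) (by norm_num)
    (by norm_num) hδ.le hv.le hbox
  obtain ⟨c, hc⟩ := exists_lintegral_comp_linearEquiv_eq volume volume V
  have hfin : ∫⁻ w, ENNReal.ofReal (f (V w)) ≠ ∞ := by
    rw [hc fun x ↦ ENNReal.ofReal (f x), hf.lintegral_ofReal]
    exact ENNReal.mul_ne_top ENNReal.coe_ne_top ENNReal.ofReal_ne_top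
  have := hf.supNorm_pos
  refine fun htop ↦ ne_top_of_le_ne_top hfin hle ?_
  simp only [LinearEquiv.coe_coe, htop]
  exact ENNReal.mul_top (ENNReal.ofReal_pos.mpr (by positivity)).ne'

theorem lintegral_fiberSup_restrict_le_of_projL1_le [Finite ι] {f₁ f₂ : Eucl n → ℝ}
    (hf₁ : IsIntegrableLogConcave f₁) (hf₂ : IsIntegrableLogConcave f₂)
    (V : (ι → ℝ) ≃ₗ[ℝ] Eucl n) (S : Finset ι)
    (h : ∀ H : Submodule ℝ (Eucl n), Module.finrank ℝ H = S.card → projL1 f₁ H ≤ projL1 f₂ H) :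
    ∫⁻ y, fiberSup S.restrict (fun w ↦ ENNReal.ofReal (f₁ (V w))) y ≤
      ∫⁻ y, fiberSup S.restrict (fun w ↦ ENNReal.ofReal (f₂ (V w))) y := by
  have := Fintype.ofFinite ι
  let π : Eucl n →ₗ[ℝ] (S → ℝ) := LinearMap.funLeft ℝ ℝ (Subtype.val : S → ι) ∘ₗ V.symm
  have hπ : Function.Surjective π :=
    (LinearMap.funLeft_surjective_of_injective ℝ ℝ _ Subtype.val_injective).comp V.symm.surjective
  have hfiber (F : Eucl n → ℝ≥0∞) : fiberSup S.restrict (fun w ↦ F (V w)) = fiberSup π F := by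
    rw [← fiberSup_comp_surjective V.surjective π F]
    congr 1
    ext w
    simp [π]
  have hfin := hf₁.lintegral_fiberSup_restrict_ne_top V S
  simp only [hfiber fun x ↦ ENNReal.ofReal (f₁ x), hfiber fun x ↦ ENNReal.ofReal (f₂ x)] at hfin ⊢
  refine lintegral_fiberSup_le_of_forall_finrank_eq volume hπ hfin fun H hH ↦ ?_
  rw [← hf₁.projL1_eq, ← hf₂.projL1_eq]
  exact h H (by simpa using hH)

end Comparison

section LevelSet

variable {α : Type*} [MeasurableSpace α] {μ : Measure α}

theorem lintegral_Ioc_ofReal_mul_rpow {a M s : ℝ} (ha : 0 ≤ a) (hM : 0 ≤ M) (hs : 0 < s) :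
    ∫⁻ t in Set.Ioc 0 M, ENNReal.ofReal (a * t ^ (s - 1)) = ENNReal.ofReal (a * (M ^ s / s)) := by
  have hint : IntervalIntegrable (fun t : ℝ ↦ a * t ^ (s - 1)) volume 0 M :=
    (intervalIntegral.intervalIntegrable_rpow' (by linarith)).const_mul a
  rw [← ofReal_integral_eq_lintegral_ofReal
      ((intervalIntegrable_iff_integrableOn_Ioc_of_le hM).mp hint),
    ← intervalIntegral.integral_of_le hM, intervalIntegral.integral_const_mul,
    integral_rpow (Or.inl (by linarith)), sub_add_cancel, Real.zero_rpow hs.ne', sub_zero]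
  filter_upwards [ae_restrict_mem measurableSet_Ioc] with t ht
  exact mul_nonneg ha (Real.rpow_nonneg ht.1.le _)

theorem exists_ofReal_mul_rpow_lt_measure_le {f : α → ℝ} (hf0 : 0 ≤ᵐ[μ] f)
    (hf : AEMeasurable f μ) {a M s : ℝ} (hfM : ∀ x, f x ≤ M) (ha : 0 ≤ a) (hM : 0 ≤ M) (hs : 0 < s)
    (h : ENNReal.ofReal (a * (M ^ s / s)) < ∫⁻ x, ENNReal.ofReal (f x) ∂μ) :
    ∃ t ∈ Set.Ioc 0 M, ENNReal.ofReal (a * t ^ (s - 1)) < μ {x | t ≤ f x} := by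
  by_contra! hle
  refine h.not_ge ?_
  calc ∫⁻ x, ENNReal.ofReal (f x) ∂μ
    _ = ∫⁻ t in Set.Ioi 0, μ {x | t ≤ f x} := lintegral_eq_lintegral_meas_le μ hf0 hf
    _ = ∫⁻ t in Set.Ioi 0, (Set.Iic M).indicator (fun t ↦ μ {x | t ≤ f x}) t := by
        rw [Set.indicator_eq_self.mpr fun t ht ↦ ?_]
        obtain ⟨x, hx⟩ := nonempty_of_measure_ne_zero ht
        exact hx.trans (hfM x)
    _ = ∫⁻ t in Set.Ioc 0 M, μ {x | t ≤ f x} := by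
        rw [setLIntegral_indicator measurableSet_Iic, Set.inter_comm, Set.Ioi_inter_Iic]
    _ ≤ ∫⁻ t in Set.Ioc 0 M, ENNReal.ofReal (a * t ^ (s - 1)) :=
        setLIntegral_mono' measurableSet_Ioc hle
    _ = ENNReal.ofReal (a * (M ^ s / s)) := lintegral_Ioc_ofReal_mul_rpow ha hM hs

theorem exists_lt_measure_inter_closedBall {X : Type*} [PseudoMetricSpace X] [MeasurableSpace X]
    (μ : Measure X) {s : Set X} {c : ℝ≥0∞} (h : c < μ s) (x : X) :
    ∃ R, c < μ (s ∩ Metric.closedBall x R) := by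
  have hmono : Monotone fun j : ℕ ↦ s ∩ Metric.closedBall x j := fun i j hij ↦
    Set.inter_subset_inter_right s (Metric.closedBall_subset_closedBall (Nat.cast_le.mpr hij))
  have hlim := tendsto_measure_iUnion_atTop (μ := μ) hmono
  rw [← Set.inter_iUnion, Metric.iUnion_closedBall_nat, Set.inter_univ] at hlim
  obtain ⟨j, hj⟩ := (hlim.eventually_const_lt h).exists
  exact ⟨j, hj⟩

end LevelSet

section Gaussian

variable {E : Type*} [NormedAddCommGroup E] [InnerProductSpace ℝ E] [FiniteDimensional ℝ E]
  [MeasurableSpace E] [BorelSpace E]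

theorem lintegral_exp_neg_norm_sq_comp_linearMap {L : E →ₗ[ℝ] E} (hL : LinearMap.det L ≠ 0)
    (c : E) :
    ∫⁻ x, ENNReal.ofReal (Real.exp (-(1 / 2) * ‖L (x - c)‖ ^ 2)) =
      ENNReal.ofReal (|(LinearMap.det L)|⁻¹ * (2 * Real.pi) ^ (Module.finrank ℝ E / 2 : ℝ)) := by
  let G : E → ℝ := fun y ↦ Real.exp (-(1 / 2) * ‖y‖ ^ 2)
  have hG : ∫ y, G y = (2 * Real.pi) ^ (Module.finrank ℝ E / 2 : ℝ) := by
    rw [GaussianFourier.integral_rexp_neg_mul_sq_norm (by norm_num)]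
    ring_nf
  have hGint : Integrable G := by
    by_contra h
    exact (hG ▸ Real.rpow_pos_of_pos Real.two_pi_pos _).ne' (integral_undef h)
  calc ∫⁻ x, ENNReal.ofReal (G (L (x - c)))
    _ = ∫⁻ x, ENNReal.ofReal (G (L x)) :=
        lintegral_sub_right_eq_self (fun x ↦ ENNReal.ofReal (G (L x))) c
    _ = ∫⁻ y, ENNReal.ofReal (G y) ∂volume.map L :=
        (lintegral_map (f := fun y ↦ ENNReal.ofReal (G y)) (by fun_prop)
          L.continuous_of_finiteDimensional.measurable).symm
    _ = ENNReal.ofReal |(LinearMap.det L)⁻¹| * ENNReal.ofReal (∫ y, G y) := by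
        rw [Measure.map_linearMap_addHaar_eq_smul_addHaar volume hL, lintegral_smul_measure,
          smul_eq_mul, ofReal_integral_eq_lintegral_ofReal hGint
            (.of_forall fun y ↦ (Real.exp_pos _).le)]
    _ = _ := by rw [← ENNReal.ofReal_mul (abs_nonneg _), abs_inv, hG]

-- Jensen: if `‖L (X - c)‖²` has mean at most `n`, then `exp (-‖L (X - c)‖² / 2)` has mean at least
-- `exp (-n / 2)`, while the density bound compares that mean with a Gaussian integral.
theorem exp_neg_le_of_integral_norm_sq_le {μ : Measure E} [IsProbabilityMeasure μ] {C : ℝ}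
    (hC : 0 ≤ C) (hμ : μ ≤ ENNReal.ofReal C • volume) {L : E →ₗ[ℝ] E} (hL : LinearMap.det L ≠ 0)
    {c : E} (hint : Integrable (fun x ↦ ‖L (x - c)‖ ^ 2) μ)
    (hle : ∫ x, ‖L (x - c)‖ ^ 2 ∂μ ≤ Module.finrank ℝ E) :
    Real.exp (-(Module.finrank ℝ E / 2)) ≤
      C * (|(LinearMap.det L)|⁻¹ * (2 * Real.pi) ^ (Module.finrank ℝ E / 2 : ℝ)) := by
  have hL' := L.continuous_of_finiteDimensional
  have hexp : Integrable (fun x ↦ Real.exp (-(1 / 2) * ‖L (x - c)‖ ^ 2)) μ := by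
    refine .of_bound (C := 1) (Continuous.aestronglyMeasurable (by fun_prop))
      (.of_forall fun x ↦ ?_)
    rw [Real.norm_of_nonneg (Real.exp_pos _).le, Real.exp_le_one_iff]
    nlinarith [sq_nonneg ‖L (x - c)‖]
  have hjensen : Real.exp (-(Module.finrank ℝ E / 2)) ≤
      ∫ x, Real.exp (-(1 / 2) * ‖L (x - c)‖ ^ 2) ∂μ := by
    refine le_trans ?_ (convexOn_exp.map_integral_le Real.continuous_exp.continuousOn isClosed_univ
      (.of_forall fun _ ↦ Set.mem_univ _) (hint.const_mul _) hexp)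
    rw [integral_const_mul, Real.exp_le_exp]
    linarith
  refine hjensen.trans ((ENNReal.ofReal_le_ofReal_iff (by positivity)).mp ?_)
  calc ENNReal.ofReal (∫ x, Real.exp (-(1 / 2) * ‖L (x - c)‖ ^ 2) ∂μ)
    _ = ∫⁻ x, ENNReal.ofReal (Real.exp (-(1 / 2) * ‖L (x - c)‖ ^ 2)) ∂μ :=
        ofReal_integral_eq_lintegral_ofReal hexp (.of_forall fun x ↦ (Real.exp_pos _).le)
    _ ≤ ∫⁻ x, ENNReal.ofReal (Real.exp (-(1 / 2) * ‖L (x - c)‖ ^ 2))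
          ∂(ENNReal.ofReal C • volume) := lintegral_mono' hμ le_rfl
    _ = _ := by
        rw [lintegral_smul_measure, lintegral_exp_neg_norm_sq_comp_linearMap hL, smul_eq_mul,
          ← ENNReal.ofReal_mul hC]

end Gaussian

section Covariance

open ProbabilityTheory

variable {ι : Type*} [Fintype ι]

open scoped MatrixOrder in
theorem exists_mul_mul_transpose_eq_one_of_posDef [DecidableEq ι] {P : Matrix ι ι ℝ}
    (hP : P.PosDef) : ∃ L : Matrix ι ι ℝ, L * P * L.transpose = 1 := by
  obtain ⟨B, hB⟩ := CStarAlgebra.nonneg_iff_eq_star_mul_self.mp hP.posSemidef.nonneg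
  rw [Matrix.star_eq_conjTranspose, Matrix.conjTranspose_eq_transpose_of_trivial] at hB
  have hB' : IsUnit B.det := isUnit_iff_ne_zero.mpr fun h ↦ hP.det_pos.ne' (by simp [hB, h])
  refine ⟨B.transpose⁻¹, ?_⟩
  rw [hB, ← Matrix.mul_assoc, Matrix.nonsing_inv_mul _ (by rwa [Matrix.det_transpose]),
    Matrix.one_mul, ← Matrix.transpose_nonsing_inv, Matrix.transpose_transpose,
    Matrix.mul_nonsing_inv _ hB']

variable {μ : Measure (EuclideanSpace ℝ ι)} [IsProbabilityMeasure μ]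

theorem variance_sum_mul_eq_dotProduct (hX : ∀ i, MemLp (fun x : EuclideanSpace ℝ ι ↦ x i) 2 μ)
    (u : ι → ℝ) :
    Var[fun x ↦ ∑ i, u i * x i; μ] =
      u ⬝ᵥ (Matrix.of fun i j ↦ cov[fun x ↦ x i, fun x ↦ x j; μ]).mulVec u := by
  rw [variance_fun_sum fun i ↦ (hX i).const_mul (u i)]
  simp only [covariance_const_mul_left, covariance_const_mul_right, dotProduct, Matrix.mulVec,
    Matrix.of_apply, Finset.mul_sum]
  exact Finset.sum_congr rfl fun i _ ↦ Finset.sum_congr rfl fun j _ ↦ by ring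

theorem integral_norm_sq_toEuclideanLin_sub [DecidableEq ι]
    (hX : ∀ i, MemLp (fun x : EuclideanSpace ℝ ι ↦ x i) 2 μ) (L : Matrix ι ι ℝ) :
    let c : EuclideanSpace ℝ ι := WithLp.toLp 2 fun i ↦ μ[fun x ↦ x i]
    Integrable (fun x ↦ ‖L.toEuclideanLin (x - c)‖ ^ 2) μ ∧
      ∫ x, ‖L.toEuclideanLin (x - c)‖ ^ 2 ∂μ = ∑ i, Var[fun x ↦ ∑ j, L i j * x j; μ] := by
  intro c
  have hLi (i : ι) : MemLp (fun x : EuclideanSpace ℝ ι ↦ ∑ j, L i j * x j) 2 μ :=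
    memLp_finsetSum _ fun j _ ↦ (hX j).const_mul (L i j)
  have hcoord (x : EuclideanSpace ℝ ι) (i : ι) : (L.toEuclideanLin (x - c)) i =
      ∑ j, L i j * x j - μ[fun x ↦ ∑ j, L i j * x j] := by
    rw [integral_finsetSum _ fun j _ ↦ ((hX j).const_mul (L i j)).integrable one_le_two]
    simp [Matrix.mulVec, dotProduct, c, integral_const_mul]
  have hint (i : ι) : Integrable (fun x ↦ (L.toEuclideanLin (x - c)) i ^ 2) μ := by
    simp only [hcoord]
    exact ((hLi i).sub (memLp_const _)).integrable_sq
  simp only [EuclideanSpace.real_norm_sq_eq]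
  refine ⟨integrable_finsetSum _ fun i _ ↦ hint i, ?_⟩
  rw [integral_finsetSum _ fun i _ ↦ hint i]
  refine Finset.sum_congr rfl fun i _ ↦ ?_
  rw [variance_eq_integral (hLi i).aemeasurable]
  simp only [hcoord]

theorem one_le_det_of_variance_le [DecidableEq ι] {C : ℝ} (hC : 0 ≤ C)
    (hμ : μ ≤ ENNReal.ofReal C • volume) (hX : ∀ i, MemLp (fun x : EuclideanSpace ℝ ι ↦ x i) 2 μ)
    {P : Matrix ι ι ℝ} (hP : P.PosDef)
    (hle : ∀ u : ι → ℝ, Var[fun x ↦ ∑ i, u i * x i; μ] ≤ u ⬝ᵥ P.mulVec u) :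
    1 ≤ C ^ 2 * (2 * Real.pi * Real.exp 1) ^ Fintype.card ι * P.det := by
  obtain ⟨L, hL⟩ := exists_mul_mul_transpose_eq_one_of_posDef hP
  have hdet : L.det ^ 2 * P.det = 1 := by
    simpa [Matrix.det_mul, sq, mul_right_comm] using congrArg Matrix.det hL
  have hL0 : L.det ≠ 0 := fun h ↦ by simp [h] at hdet
  obtain ⟨hint, hval⟩ := integral_norm_sq_toEuclideanLin_sub hX L
  have hvar (i : ι) : Var[fun x ↦ ∑ j, L i j * x j; μ] ≤ 1 := by
    refine (hle (L i)).trans_eq ?_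
    calc L i ⬝ᵥ P.mulVec (L i)
      _ = (L * P * L.transpose) i i := by
          rw [Matrix.mul_assoc]
          simp only [Matrix.mul_apply, Matrix.mulVec, dotProduct, Matrix.transpose_apply]
      _ = 1 := by rw [hL, Matrix.one_apply_eq]
  have hexp := exp_neg_le_of_integral_norm_sq_le (L := L.toEuclideanLin) hC hμ
    (by rwa [LinearMap.det_toLpLin]) hint (by
      rw [hval, finrank_euclideanSpace]
      exact (Finset.sum_le_sum fun i _ ↦ hvar i).trans_eq (by simp))
  rw [LinearMap.det_toLpLin, finrank_euclideanSpace] at hexp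
  have hpi : ((2 * Real.pi) ^ (Fintype.card ι / 2 : ℝ)) ^ 2 = (2 * Real.pi) ^ Fintype.card ι := by
    rw [← Real.rpow_mul_natCast (by positivity), Nat.cast_ofNat, div_mul_cancel₀ _ two_ne_zero,
      Real.rpow_natCast]
  have hexp_sq : Real.exp (-(Fintype.card ι / 2)) ^ 2 = (Real.exp 1 ^ Fintype.card ι)⁻¹ := by
    rw [← Real.exp_nat_mul, ← Real.exp_nat_mul, ← Real.exp_neg]
    push_cast
    ring_nf
  have hsq := pow_le_pow_left₀ (Real.exp_pos _).le hexp 2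
  rw [hexp_sq, mul_pow, mul_pow, inv_pow, sq_abs, hpi, ← eq_inv_of_mul_eq_one_right hdet,
    inv_le_iff_one_le_mul₀ (by positivity)] at hsq
  exact hsq.trans_eq (by ring)

theorem one_le_det_covariance [DecidableEq ι] {C : ℝ} (hC : 0 ≤ C)
    (hμ : μ ≤ ENNReal.ofReal C • volume)
    (hX : ∀ i, MemLp (fun x : EuclideanSpace ℝ ι ↦ x i) 2 μ) :
    1 ≤ C ^ 2 * (2 * Real.pi * Real.exp 1) ^ Fintype.card ι *
      (Matrix.of fun i j ↦ cov[fun x ↦ x i, fun x ↦ x j; μ]).det := by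
  set A : Matrix ι ι ℝ := Matrix.of fun i j ↦ cov[fun x ↦ x i, fun x ↦ x j; μ]
  have hA : A.PosSemidef := by
    refine .of_dotProduct_mulVec_nonneg (Matrix.ext fun i j ↦ covariance_comm _ _) fun u ↦ ?_
    rw [star_trivial, ← variance_sum_mul_eq_dotProduct hX]
    exact variance_nonneg _ _
  -- A small multiple of the identity makes `A` definite; it is removed by continuity of `det`.
  have hε (ε : ℝ) (hε : 0 < ε) :
      1 ≤ C ^ 2 * (2 * Real.pi * Real.exp 1) ^ Fintype.card ι * (A + ε • 1).det := by
    refine one_le_det_of_variance_le hC hμ hX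
      (Matrix.PosDef.posSemidef_add hA (Matrix.PosDef.one.smul hε)) fun u ↦ ?_
    rw [variance_sum_mul_eq_dotProduct hX, Matrix.add_mulVec, dotProduct_add]
    refine le_add_of_nonneg_right ?_
    simpa using (Matrix.PosSemidef.one.smul hε.le).dotProduct_mulVec_nonneg u
  have hcont : Continuous fun ε : ℝ ↦
      C ^ 2 * (2 * Real.pi * Real.exp 1) ^ Fintype.card ι * (A + ε • 1).det := by
    fun_prop
  simpa using ge_of_tendsto ((hcont.tendsto 0).mono_left nhdsWithin_le_nhds)
    (eventually_nhdsWithin_of_forall (s := Set.Ioi 0) hε)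

end Covariance

section Andreief

variable {ι Ω : Type*} [Fintype ι] [DecidableEq ι] [MeasurableSpace Ω] {μ : Measure Ω}
  [SigmaFinite μ] {f g : ι → Ω → ℝ}

theorem integral_det_mul_det (h : ∀ i j, Integrable (fun ω ↦ f i ω * g j ω) μ) :
    Integrable (fun ω : ι → Ω ↦ (Matrix.of fun i j ↦ f j (ω i)).det *
      (Matrix.of fun i j ↦ g j (ω i)).det) (.pi fun _ ↦ μ) ∧
    ∫ ω : ι → Ω, (Matrix.of fun i j ↦ f j (ω i)).det * (Matrix.of fun i j ↦ g j (ω i)).det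
      ∂.pi (fun _ ↦ μ) =
      (Fintype.card ι).factorial * (Matrix.of fun i j ↦ ∫ ω, f i ω * g j ω ∂μ).det := by
  set M : Matrix ι ι ℝ := Matrix.of fun i j ↦ ∫ ω, f i ω * g j ω ∂μ
  have hexpand (ω : ι → Ω) : (Matrix.of fun i j ↦ f j (ω i)).det *
      (Matrix.of fun i j ↦ g j (ω i)).det =
      ∑ σ : Equiv.Perm ι, ∑ τ : Equiv.Perm ι, ((Equiv.Perm.sign σ : ℤ) : ℝ) *
        ((Equiv.Perm.sign τ : ℤ) : ℝ) * ∏ i, f (σ i) (ω i) * g (τ i) (ω i) := by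
    rw [← Matrix.det_transpose, ← Matrix.det_transpose (Matrix.of fun i j ↦ g j (ω i)),
      Matrix.det_apply', Matrix.det_apply', Finset.sum_mul_sum]
    simp only [Matrix.transpose_apply, Matrix.of_apply, Finset.prod_mul_distrib]
    exact Finset.sum_congr rfl fun σ _ ↦ Finset.sum_congr rfl fun τ _ ↦ by ring
  have hint (σ τ : Equiv.Perm ι) : Integrable (fun ω : ι → Ω ↦ ((Equiv.Perm.sign σ : ℤ) : ℝ) *
      ((Equiv.Perm.sign τ : ℤ) : ℝ) * ∏ i, f (σ i) (ω i) * g (τ i) (ω i)) (.pi fun _ ↦ μ) :=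
    (Integrable.fintype_prod fun i ↦ h (σ i) (τ i)).const_mul _
  have hdet (σ : Equiv.Perm ι) : ∑ τ : Equiv.Perm ι, ((Equiv.Perm.sign σ : ℤ) : ℝ) *
      ((Equiv.Perm.sign τ : ℤ) : ℝ) * ∏ i, M (σ i) (τ i) = M.det := by
    have hσ : ((Equiv.Perm.sign σ : ℤ) : ℝ) * ((Equiv.Perm.sign σ : ℤ) : ℝ) = 1 := by
      rw [← Int.cast_mul, ← Units.val_mul, Int.units_mul_self, Units.val_one, Int.cast_one]
    simp only [mul_assoc, ← Finset.mul_sum]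
    calc _ = ((Equiv.Perm.sign σ : ℤ) : ℝ) * (M.submatrix σ id).transpose.det := by
          rw [Matrix.det_apply']; rfl
      _ = M.det := by rw [Matrix.det_transpose, Matrix.det_permute, ← mul_assoc, hσ, one_mul]
  simp only [hexpand]
  refine ⟨integrable_finsetSum _ fun σ _ ↦ integrable_finsetSum _ fun τ _ ↦ hint σ τ, ?_⟩
  rw [integral_finsetSum _ fun σ _ ↦ integrable_finsetSum _ fun τ _ ↦ hint σ τ]
  calc _ = ∑ _ : Equiv.Perm ι, M.det := Finset.sum_congr rfl fun σ _ ↦ by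
        rw [integral_finsetSum _ fun τ _ ↦ hint σ τ, ← hdet σ]
        refine Finset.sum_congr rfl fun τ _ ↦ ?_
        rw [integral_const_mul,
          integral_fintype_prod_eq_prod (f := fun i ω ↦ f (σ i) ω * g (τ i) ω)]
        rfl
    _ = _ := by rw [Finset.sum_const, Finset.card_univ, Fintype.card_perm, nsmul_eq_mul]

end Andreief

section Selection

open ProbabilityTheory

theorem integral_sub_mul_sub_prod {Ω : Type*} [MeasurableSpace Ω] {μ : Measure Ω}
    [IsProbabilityMeasure μ] {X Y : Ω → ℝ} (hX : MemLp X 2 μ) (hY : MemLp Y 2 μ) :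
    ∫ p, (X p.1 - X p.2) * (Y p.1 - Y p.2) ∂μ.prod μ = 2 * cov[X, Y; μ] := by
  have hX₁ := hX.comp_fst μ
  have hX₂ := hX.comp_snd μ
  have hY₁ := hY.comp_fst μ
  have hY₂ := hY.comp_snd μ
  have hmean : ∫ p, (X p.1 - X p.2) ∂μ.prod μ = 0 := by
    rw [integral_sub (hX₁.integrable one_le_two) (hX₂.integrable one_le_two),
      integral_fun_fst, integral_fun_snd, sub_self]
  have hfst : cov[fun p ↦ X p.1, fun p ↦ Y p.1; μ.prod μ] = cov[X, Y; μ] := by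
    rw [covariance_eq_sub hX₁ hY₁, covariance_eq_sub hX hY]
    simp [integral_fun_fst, integral_fun_fst (fun x ↦ X x * Y x)]
  have hsnd : cov[fun p ↦ X p.2, fun p ↦ Y p.2; μ.prod μ] = cov[X, Y; μ] := by
    rw [covariance_eq_sub hX₂ hY₂, covariance_eq_sub hX hY]
    simp [integral_fun_snd, integral_fun_snd (fun x ↦ X x * Y x)]
  have hcov := covariance_sub_sub hX₁ hX₂ hY₁ hY₂
  rw [hfst, hsnd, covariance_fst_snd_prod hX hY,
    covariance_comm (fun x : Ω × Ω ↦ X x.2),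
    covariance_fst_snd_prod hY hX,
    covariance_eq_sub (hX₁.sub hX₂) (hY₁.sub hY₂)] at hcov
  simp only [Pi.mul_apply, Pi.sub_apply, hmean, zero_mul] at hcov
  linarith

variable {ι : Type*} [Fintype ι] [DecidableEq ι] {K : Set (EuclideanSpace ℝ ι)}

theorem exists_le_det_sub_sq {μ : Measure (EuclideanSpace ℝ ι)} [IsProbabilityMeasure μ] {C : ℝ}
    (hC : 0 ≤ C) (hμ : μ ≤ ENNReal.ofReal C • volume)
    (hX : ∀ i, MemLp (fun x : EuclideanSpace ℝ ι ↦ x i) 2 μ) (hK : ∀ᵐ x ∂μ, x ∈ K) :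
    ∃ x x' : ι → EuclideanSpace ℝ ι, (∀ i, x i ∈ K) ∧ (∀ i, x' i ∈ K) ∧
      (Fintype.card ι).factorial * 2 ^ Fintype.card ι ≤
        C ^ 2 * (2 * Real.pi * Real.exp 1) ^ Fintype.card ι *
          (Matrix.of fun i j ↦ x i j - x' i j).det ^ 2 := by
  have hg (i : ι) : MemLp (fun p : EuclideanSpace ℝ ι × EuclideanSpace ℝ ι ↦ p.1 i - p.2 i) 2
      (μ.prod μ) := ((hX i).comp_fst μ).sub ((hX i).comp_snd μ)
  obtain ⟨hint, hval⟩ := integral_det_mul_det fun i j ↦ (hg i).integrable_mul (hg j)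
  have hmem : ∀ᵐ w ∂Measure.pi fun _ : ι ↦ μ.prod μ, ∀ i, (w i).1 ∈ K ∧ (w i).2 ∈ K :=
    Filter.eventually_all.mpr fun i ↦
      (Measure.quasiMeasurePreserving_eval (fun _ ↦ μ.prod μ) i).ae
        ((Measure.quasiMeasurePreserving_fst.ae hK).and (Measure.quasiMeasurePreserving_snd.ae hK))
  obtain ⟨w, hw, hle⟩ := exists_notMem_null_integral_le hint (ae_iff.mp hmem)
  have hwK := not_not.mp hw
  refine ⟨fun i ↦ (w i).1, fun i ↦ (w i).2, fun i ↦ (hwK i).1, fun i ↦ (hwK i).2, ?_⟩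
  have hcov : (Matrix.of fun i j ↦ ∫ p : EuclideanSpace ℝ ι × EuclideanSpace ℝ ι,
      (p.1 i - p.2 i) * (p.1 j - p.2 j) ∂μ.prod μ).det =
      2 ^ Fintype.card ι * (Matrix.of fun i j ↦ cov[fun x ↦ x i, fun x ↦ x j; μ]).det := by
    rw [← Matrix.det_smul]
    congr 1 with i j
    exact integral_sub_mul_sub_prod (hX i) (hX j)
  rw [hval, hcov, ← sq] at hle
  calc ((Fintype.card ι).factorial * 2 ^ Fintype.card ι : ℝ)
    _ = (Fintype.card ι).factorial * 2 ^ Fintype.card ι * 1 := (mul_one _).symm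
    _ ≤ (Fintype.card ι).factorial * 2 ^ Fintype.card ι *
          (C ^ 2 * (2 * Real.pi * Real.exp 1) ^ Fintype.card ι *
            (Matrix.of fun i j ↦ cov[fun x ↦ x i, fun x ↦ x j; μ]).det) := by
        gcongr
        exact one_le_det_covariance hC hμ hX
    _ = C ^ 2 * (2 * Real.pi * Real.exp 1) ^ Fintype.card ι * ((Fintype.card ι).factorial *
          (2 ^ Fintype.card ι * (Matrix.of fun i j ↦ cov[fun x ↦ x i, fun x ↦ x j; μ]).det)) := by
        ring
    _ ≤ _ := by gcongr

theorem exists_volume_sq_le_det_sub_sq (hKm : NullMeasurableSet K) (hKb : Bornology.IsBounded K)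
    (hK0 : volume K ≠ 0) :
    ∃ x x' : ι → EuclideanSpace ℝ ι, (∀ i, x i ∈ K) ∧ (∀ i, x' i ∈ K) ∧
      (Fintype.card ι).factorial * 2 ^ Fintype.card ι * volume.real K ^ 2 ≤
        (2 * Real.pi * Real.exp 1) ^ Fintype.card ι *
          (Matrix.of fun i j ↦ x i j - x' i j).det ^ 2 := by
  have hKtop : volume K ≠ ⊤ := hKb.measure_lt_top.ne
  have hprob : IsProbabilityMeasure (cond volume K) :=
    cond_isProbabilityMeasure_of_finite hK0 hKtop
  have hmem : ∀ᵐ x ∂cond volume K, x ∈ K := ae_cond_mem₀ hKm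
  have hpos : 0 < volume.real K := ENNReal.toReal_pos hK0 hKtop
  have hle : cond volume K ≤ ENNReal.ofReal (volume.real K)⁻¹ • volume := by
    rw [ENNReal.ofReal_inv_of_pos hpos, measureReal_def, ENNReal.ofReal_toReal hKtop]
    exact smul_le_smul_left _ Measure.restrict_le_self
  obtain ⟨R, hR⟩ := hKb.exists_norm_le
  have hX (i : ι) : MemLp (fun x : EuclideanSpace ℝ ι ↦ x i) 2 (cond volume K) :=
    .of_bound (by fun_prop) R (hmem.mono fun x hx ↦ (PiLp.norm_apply_le x i).trans (hR x hx))
  obtain ⟨x, x', hx, hx', h⟩ := exists_le_det_sub_sq (inv_nonneg.mpr hpos.le) hle hX hmem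
  refine ⟨x, x', hx, hx', ?_⟩
  rwa [inv_pow, mul_assoc, inv_mul_eq_div, le_div_iff₀ (by positivity)] at h

end Selection

section SuperlevelDifferences

theorem IsIntegrableLogConcave.exists_lt_measure_superlevel {n : ℕ} {f : Eucl n → ℝ}
    (hf : IsIntegrableLogConcave f) {a : ℝ} (ha : 0 ≤ a)
    (h : 2 * a * √(supNorm f) < ∫ x, f x) :
    ∃ v, 0 < v ∧ ENNReal.ofReal (a / √v) < volume {x | v ≤ f x} := by
  have hlt : ENNReal.ofReal (a * (supNorm f ^ (1 / 2 : ℝ) / (1 / 2))) <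
      ∫⁻ x, ENNReal.ofReal (f x) := by
    rw [hf.lintegral_ofReal, ENNReal.ofReal_lt_ofReal_iff hf.integral_pos, ← Real.sqrt_eq_rpow]
    linarith
  obtain ⟨v, hv, hlt⟩ := exists_ofReal_mul_rpow_lt_measure_le (.of_forall hf.nonneg)
    hf.integrable.aemeasurable hf.le_supNorm ha hf.supNorm_pos.le one_half_pos hlt
  refine ⟨v, hv.1, ?_⟩
  rwa [show (1 / 2 - 1 : ℝ) = -(1 / 2) by norm_num, Real.rpow_neg hv.1.le, ← Real.sqrt_eq_rpow,
    ← div_eq_mul_inv] at hlt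

theorem IsIntegrableLogConcave.exists_le_det_sub_sq {n : ℕ} {f : Eucl n → ℝ}
    (hf : IsIntegrableLogConcave f) {c : ℝ} (hc0 : 0 ≤ c) (hc : c < 1 / 4) :
    ∃ v, 0 < v ∧ ∃ x x' : Fin n → Eucl n, (∀ i, v ≤ f (x i)) ∧ (∀ i, v ≤ f (x' i)) ∧
      c * n.factorial * (∫ x, f x) ^ 2 ≤
        (Real.pi * Real.exp 1) ^ n * (Matrix.of fun i j ↦ x i j - x' i j).det ^ 2 *
          (supNorm f * v) := by
  have hM := hf.supNorm_pos
  have hI := hf.integral_pos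
  have hsqrt : √c < 1 / 2 := (Real.sqrt_lt' (by norm_num)).mpr (by linarith)
  obtain ⟨v, hv, hlt⟩ := hf.exists_lt_measure_superlevel (a := √c * (∫ x, f x) / √(supNorm f))
    (by positivity) (by
      rw [mul_assoc, div_mul_cancel₀ _ (Real.sqrt_pos.mpr hM).ne']
      nlinarith)
  obtain ⟨R, hR⟩ := exists_lt_measure_inter_closedBall volume hlt (0 : Eucl n)
  have hbdd := Metric.isBounded_closedBall.subset
    (Set.inter_subset_right (s := {x | v ≤ f x}) (t := Metric.closedBall (0 : Eucl n) R))
  have hmeas := ((hf.convex_superlevel v).nullMeasurableSet volume).inter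
    (measurableSet_closedBall (x := (0 : Eucl n)) (ε := R)).nullMeasurableSet
  obtain ⟨x, x', hx, hx', hdet⟩ :=
    exists_volume_sq_le_det_sub_sq hmeas hbdd (pos_of_gt hR).ne'
  refine ⟨v, hv, x, x', fun i ↦ (hx i).1, fun i ↦ (hx' i).1, ?_⟩
  have hvol : √c * (∫ x, f x) / √(supNorm f) / √v ≤
      volume.real ({x | v ≤ f x} ∩ Metric.closedBall 0 R) :=
    (ENNReal.ofReal_le_iff_le_toReal hbdd.measure_lt_top.ne).mp hR.le
  have hvol_sq := pow_le_pow_left₀ (by positivity) hvol 2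
  rw [div_pow, div_pow, mul_pow, Real.sq_sqrt hc0, Real.sq_sqrt hM.le, Real.sq_sqrt hv.le,
    div_div, div_le_iff₀ (by positivity)] at hvol_sq
  rw [Fintype.card_fin, mul_assoc 2, mul_pow, mul_comm (n.factorial : ℝ), mul_assoc, mul_assoc,
    mul_le_mul_iff_right₀ (by positivity)] at hdet
  calc c * n.factorial * (∫ x, f x) ^ 2
    _ = n.factorial * (c * (∫ x, f x) ^ 2) := by ring
    _ ≤ n.factorial * (volume.real ({x | v ≤ f x} ∩ Metric.closedBall 0 R) ^ 2 *
          (supNorm f * v)) := by gcongr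
    _ = n.factorial * volume.real ({x | v ≤ f x} ∩ Metric.closedBall 0 R) ^ 2 *
          (supNorm f * v) := by ring
    _ ≤ _ := by gcongr

end SuperlevelDifferences

section Frame

theorem exists_linearEquiv_lintegral_comp_eq {ι : Type*} [Fintype ι] [DecidableEq ι]
    {a : ι → EuclideanSpace ℝ ι} (ha : (Matrix.of fun i j ↦ a i j).det ≠ 0) :
    ∃ V : (ι → ℝ) ≃ₗ[ℝ] EuclideanSpace ℝ ι, (∀ w, V w = ∑ i, w i • a i) ∧
      ∀ g : EuclideanSpace ℝ ι → ℝ≥0∞, ∫⁻ w, g (V w) =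
        ENNReal.ofReal |(Matrix.of fun i j ↦ a i j).det|⁻¹ * ∫⁻ x, g x := by
  set A : Matrix ι ι ℝ := Matrix.of fun i j ↦ a i j
  have hA : A.transpose.det ≠ 0 := by rwa [Matrix.det_transpose]
  let e := A.transpose.toLin'.equivOfDetNeZero (by rwa [LinearMap.det_toLin'])
  refine ⟨e.trans (WithLp.linearEquiv 2 ℝ (ι → ℝ)).symm, fun w ↦ ?_, fun g ↦ ?_⟩
  · ext j
    simp [e, A, Matrix.mulVec, dotProduct, mul_comm]
  · calc ∫⁻ w, g (WithLp.toLp 2 (e w))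
      _ = ∫⁻ y, g (WithLp.toLp 2 y) ∂volume.map e :=
          (lintegral_map_equiv (fun y ↦ g (WithLp.toLp 2 y))
            e.toContinuousLinearEquiv.toHomeomorph.toMeasurableEquiv).symm
      _ = ENNReal.ofReal |A.det|⁻¹ * ∫⁻ y, g (WithLp.toLp 2 y) := by
          have hmap : volume.map e = ENNReal.ofReal |A.transpose.det⁻¹| • volume :=
            Real.map_matrix_volume_pi_eq_smul_volume_pi hA
          rw [hmap, lintegral_smul_measure, smul_eq_mul, Matrix.det_transpose, abs_inv]
      _ = _ := by
          rw [(PiLp.volume_preserving_toLp ι).lintegral_comp_emb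
            (MeasurableEquiv.toLp 2 (ι → ℝ)).measurableEmbedding]

theorem sum_inv_card_smul_add_sum_smul_sub_mem_of_convex {ι E : Type*} [AddCommGroup E]
    [Module ℝ E] {K : Set E} (hK : Convex ℝ K) {T : Finset ι} (hT : T.Nonempty) {a b : ι → E}
    (ha : ∀ i ∈ T, a i ∈ K) (hb : ∀ i ∈ T, b i ∈ K) {w : ι → ℝ}
    (hw : ∀ i ∈ T, w i ∈ Set.Icc 0 (T.card : ℝ)⁻¹) :
    ∑ i ∈ T, (T.card : ℝ)⁻¹ • b i + ∑ i ∈ T, w i • (a i - b i) ∈ K := by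
  have hm : 0 < (T.card : ℝ) := Nat.cast_pos.mpr hT.card_pos
  have hseg (i : ι) (hi : i ∈ T) :
      (1 - T.card * w i) • b i + (T.card * w i) • a i ∈ K :=
    hK (hb i hi) (ha i hi) (sub_nonneg.mpr ((le_inv_mul_iff₀ hm).mp (by simpa using (hw i hi).2)))
      (mul_nonneg hm.le (hw i hi).1) (sub_add_cancel _ _)
  have hmem := hK.sum_mem (t := T) (w := fun _ ↦ (T.card : ℝ)⁻¹) (fun _ _ ↦ by positivity)
    (by simp [hm.ne']) hseg
  convert hmem using 1
  rw [← Finset.sum_add_distrib]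
  refine Finset.sum_congr rfl fun i _ ↦ ?_
  rw [smul_add, smul_smul, smul_smul, mul_sub, mul_one, inv_mul_cancel_left₀ hm.ne', sub_smul,
    smul_sub]
  abel

theorem IsIntegrableLogConcave.lintegral_fiberSup_restrict_le_of_superlevel {n : ℕ} {ι : Type*}
    [Fintype ι] [DecidableEq ι] {f : Eucl n → ℝ} (hf : IsIntegrableLogConcave f)
    {x x' : ι → Eucl n} (V : (ι → ℝ) ≃ₗ[ℝ] Eucl n) (hV : ∀ w, V w = ∑ i, w i • (x i - x' i))
    {v : ℝ} (hv : 0 ≤ v) (hx : ∀ i, v ≤ f (x i)) (hx' : ∀ i, v ≤ f (x' i)) {S : Finset ι}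
    (hS : Sᶜ.Nonempty) {t : ℝ} (ht0 : 0 < t) (ht1 : t < 1) :
    ENNReal.ofReal ((v / supNorm f) ^ t * ((1 - t) ^ S.card * (t / Sᶜ.card) ^ Sᶜ.card)) *
        ∫⁻ y, fiberSup S.restrict (fun w ↦ ENNReal.ofReal (f (V w))) y ≤
      ∫⁻ w, ENNReal.ofReal (f (V w)) := by
  rw [div_eq_mul_inv t]
  refine hf.lintegral_fiberSup_restrict_le V.toLinearMap S ht0 ht1 (by positivity) hv
    (p := V.symm (∑ i ∈ Sᶜ, (Sᶜ.card : ℝ)⁻¹ • x' i)) fun w hw ↦ ?_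
  have hwS (i : ι) (hi : i ∈ S) : w i = 0 :=
    le_antisymm (by simpa [hi] using hw.2 i) (hw.1 i)
  have hsum : ∑ i, w i • (x i - x' i) = ∑ i ∈ Sᶜ, w i • (x i - x' i) :=
    (Finset.sum_subset (Finset.subset_univ _) fun i _ hi ↦ by
      rw [hwS i (by simpa using hi), zero_smul]).symm
  rw [LinearEquiv.coe_coe, map_add, V.apply_symm_apply, hV, hsum]
  refine sum_inv_card_smul_add_sum_smul_sub_mem_of_convex (hf.convex_superlevel v) hS
    (fun i _ ↦ hx i) (fun i _ ↦ hx' i) fun i hi ↦ ⟨hw.1 i, ?_⟩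
  simpa [Finset.mem_compl.mp hi] using hw.2 i

end Frame

section Numerics

open Real

theorem exp_neg_half_pow_le {k n : ℕ} (hkn : k ≤ n) (hn : 0 < n) :
    exp (-(1 / 2)) ^ (n - k) ≤ (1 - ((n : ℝ) - k) / (2 * n)) ^ k := by
  have : (0 : ℝ) < n := Nat.cast_pos.mpr hn
  have hbase : 1 - ((n : ℝ) - k) / (2 * n) = (n + k) / (2 * n) := by field_simp; ring
  have hpos : 0 < ((n : ℝ) + k) / (2 * n) := by positivity
  rw [hbase, ← log_le_log_iff (by positivity) (by positivity), log_pow, log_pow, log_exp,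
    Nat.cast_sub hkn]
  calc ((n : ℝ) - k) * -(1 / 2)
    _ ≤ k * (1 - (((n : ℝ) + k) / (2 * n))⁻¹) := by
        rw [inv_div, ← sub_nonneg]
        have : k * (1 - 2 * n / ((n : ℝ) + k)) - ((n : ℝ) - k) * -(1 / 2) =
            ((n : ℝ) - k) ^ 2 / (2 * (n + k)) := by field_simp; ring
        rw [this]
        positivity
    _ ≤ k * log ((n + k) / (2 * n)) := by gcongr; exact one_sub_inv_le_log_of_pos hpos

theorem pi_mul_exp_sq_mul_pow_le {n : ℕ} (hn : 3 ≤ n) :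
    (π * exp 1 ^ 2 * n) ^ n ≤ 6 / 25 * n.factorial * 64 ^ n := by
  have hn' : (3 : ℝ) ≤ n := by exact_mod_cast hn
  have hpe : π * exp 1 ^ 3 ≤ 64 := by
    calc π * exp 1 ^ 3 ≤ 3.1416 * 2.7182818286 ^ 3 := by
          gcongr
          exacts [pi_lt_d4.le, exp_one_lt_d9.le]
      _ ≤ 64 := by norm_num
  have hsqrt : 25 / 6 ≤ √(2 * π * n) := by
    refine le_sqrt_of_sq_le ?_
    nlinarith [pi_gt_d2]
  calc (π * exp 1 ^ 2 * n) ^ n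
    _ = (π * exp 1 ^ 3) ^ n * (n / exp 1) ^ n := by
        rw [← mul_pow]
        congr 1
        field_simp
    _ ≤ 64 ^ n * (6 / 25 * √(2 * π * n) * (n / exp 1) ^ n) := by
        gcongr
        exact le_mul_of_one_le_left (by positivity) (by linarith)
    _ ≤ 64 ^ n * (6 / 25 * n.factorial) := by
        rw [mul_assoc (6 / 25)]
        gcongr
        exact Stirling.le_factorial_stirling n
    _ = _ := mul_comm _ _

theorem exists_pow_le_and_pi_mul_exp_pow_le {k n : ℕ} (hk : 0 < k) (hkn : k < n) :
    ∃ ρ : ℝ, 0 < ρ ∧ ρ ^ (n - k) ≤ (8 / √n) ^ (n - k) * (1 - ((n : ℝ) - k) / (2 * n)) ^ k ∧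
      (π * exp 1) ^ n ≤ 6 / 25 * n.factorial * (ρ ^ 2) ^ n := by
  have hn : (0 : ℝ) < n := Nat.cast_pos.mpr (by omega)
  have hsq (b : ℝ) : (8 / √n * b) ^ 2 = 64 * b ^ 2 / n := by
    rw [mul_pow, div_pow, sq_sqrt hn.le]
    ring
  -- Stirling's bound with `ρ = 8 * exp (-1 / 2) / √n` just fails for `n = 2`, where the loss comes
  -- from estimating the power of `1 - (n - k) / (2 * n) = 3 / 4` by an exponential.
  rcases (show n = 2 ∨ 3 ≤ n by omega) with rfl | hn3
  · obtain rfl : k = 1 := by omega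
    refine ⟨8 / √(2 : ℕ) * (3 / 4), by positivity, by norm_num, ?_⟩
    calc (π * exp 1) ^ 2 ≤ 9 ^ 2 := by
          gcongr
          nlinarith [pi_lt_d2, exp_one_lt_d9, pi_pos, exp_pos 1]
      _ ≤ _ := by
        rw [hsq]
        norm_num
  · refine ⟨8 / √n * exp (-(1 / 2)), by positivity, ?_, ?_⟩
    · rw [mul_pow]
      gcongr
      exact exp_neg_half_pow_le hkn.le (by omega)
    · have hexp : exp (-(1 / 2)) ^ 2 = (exp 1)⁻¹ := by
        rw [← exp_nat_mul, ← exp_neg]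
        norm_num
      have hfactor : π * exp 1 = π * exp 1 ^ 2 * n * (exp 1 * n)⁻¹ := by field_simp
      rw [hsq, hexp, hfactor, mul_pow, ← div_eq_mul_inv, div_div, div_eq_mul_inv 64, mul_pow 64,
        ← mul_assoc]
      gcongr
      exact pi_mul_exp_sq_mul_pow_le hn3

theorem rpow_le_of_factorial_mul_sq_le {k n : ℕ} (hk : 0 < k) (hkn : k < n) {x y : ℝ} (hx : 0 ≤ x)
    (hy : 0 ≤ y) (h : 6 / 25 * n.factorial * x ^ 2 ≤ (π * exp 1) ^ n * y) :
    x ^ (((n : ℝ) - k) / n) ≤ (8 / √n) ^ (n - k) *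
      (y ^ (((n : ℝ) - k) / (2 * n)) * (1 - ((n : ℝ) - k) / (2 * n)) ^ k) := by
  have hn : (0 : ℝ) < n := Nat.cast_pos.mpr (by omega)
  have hm : 0 ≤ (n : ℝ) - k := sub_nonneg.mpr (Nat.cast_le.mpr hkn.le)
  obtain ⟨ρ, hρ, hρm, hρn⟩ := exists_pow_le_and_pi_mul_exp_pow_le hk hkn
  have hsq : x ^ 2 ≤ (ρ ^ 2) ^ n * y := by
    have hfac : (0 : ℝ) < 6 / 25 * n.factorial := by positivity
    refine le_of_mul_le_mul_left (h.trans ?_) hfac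
    rw [← mul_assoc]
    gcongr
  calc x ^ (((n : ℝ) - k) / n)
    _ = (x ^ 2) ^ (((n : ℝ) - k) / (2 * n)) := by
        rw [← rpow_natCast_mul hx]
        congr 1
        push_cast
        field_simp
    _ ≤ ((ρ ^ 2) ^ n * y) ^ (((n : ℝ) - k) / (2 * n)) := by gcongr
    _ = ρ ^ (n - k) * y ^ (((n : ℝ) - k) / (2 * n)) := by
        rw [mul_rpow (by positivity) hy, ← pow_mul, ← rpow_natCast_mul hρ.le,
          ← rpow_natCast ρ (n - k), Nat.cast_sub hkn.le]
        congr 2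
        push_cast
        field_simp
    _ ≤ (8 / √n) ^ (n - k) * (1 - ((n : ℝ) - k) / (2 * n)) ^ k *
          y ^ (((n : ℝ) - k) / (2 * n)) := by gcongr
    _ = _ := by ring

theorem rpow_mul_div_div_le_of_rpow_div_le {a b C d E I M : ℝ} (hab : a + b = 1) (hd : 0 < d)
    (hE : 0 < E) (hI : 0 < I) (hM : 0 < M) (h : (I / (M * d)) ^ b ≤ C * E) :
    d ^ a * (I / d / E) ≤ C * I ^ a * M ^ b := by
  have hcancel : M * (I / (M * d)) = I / d := by field_simp
  have hsplit : d ^ a * (I / d) = I ^ a * M ^ b * (I / (M * d)) ^ b := by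
    calc d ^ a * (I / d)
      _ = d ^ a * ((I / d) ^ a * (I / d) ^ b) := by
          rw [← rpow_add (div_pos hI hd), hab, rpow_one]
      _ = (d * (I / d)) ^ a * (M * (I / (M * d))) ^ b := by
          rw [← mul_assoc, ← mul_rpow hd.le (by positivity), hcancel]
      _ = I ^ a * M ^ b * (I / (M * d)) ^ b := by
          rw [mul_div_cancel₀ _ hd.ne', mul_rpow hM.le (by positivity), mul_assoc]
  rw [← mul_div_assoc, hsplit, div_le_iff₀ hE]
  calc I ^ a * M ^ b * (I / (M * d)) ^ b ≤ I ^ a * M ^ b * (C * E) := by gcongr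
    _ = _ := by ring

end Numerics

section Assembly

variable {n k : ℕ} {f : Eucl n → ℝ}

theorem IsIntegrableLogConcave.exists_linearEquiv_le_superlevel (hf : IsIntegrableLogConcave f)
    {c : ℝ} (hc0 : 0 < c) (hc : c < 1 / 4) :
    ∃ (V : (Fin n → ℝ) ≃ₗ[ℝ] Eucl n) (d v : ℝ) (x x' : Fin n → Eucl n), 0 < d ∧ 0 < v ∧
      (∀ g : Eucl n → ℝ≥0∞, ∫⁻ w, g (V w) = ENNReal.ofReal d⁻¹ * ∫⁻ x, g x) ∧
      (∀ w, V w = ∑ i, w i • (x i - x' i)) ∧ (∀ i, v ≤ f (x i)) ∧ (∀ i, v ≤ f (x' i)) ∧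
      c * n.factorial * ((∫ x, f x) / (supNorm f * d)) ^ 2 ≤
        (Real.pi * Real.exp 1) ^ n * (v / supNorm f) := by
  obtain ⟨v, hv, x, x', hx, hx', hvol⟩ := hf.exists_le_det_sub_sq hc0.le hc
  have hI := hf.integral_pos
  have hM := hf.supNorm_pos
  set D := (Matrix.of fun i j ↦ x i j - x' i j).det
  have hD : D ≠ 0 := by
    intro hD
    rw [hD, zero_pow two_ne_zero, mul_zero, zero_mul] at hvol
    exact hvol.not_gt (by positivity)
  obtain ⟨V, hV, hVvol⟩ := exists_linearEquiv_lintegral_comp_eq (a := fun i ↦ x i - x' i) hD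
  have hd : 0 < |D| := abs_pos.mpr hD
  refine ⟨V, |D|, v, x, x', hd, hv, hVvol, hV, hx, hx', ?_⟩
  calc c * n.factorial * ((∫ x, f x) / (supNorm f * |D|)) ^ 2
    _ = c * n.factorial * (∫ x, f x) ^ 2 / (supNorm f ^ 2 * D ^ 2) := by
        rw [div_pow, mul_pow, sq_abs, mul_div_assoc]
    _ ≤ (Real.pi * Real.exp 1) ^ n * D ^ 2 * (supNorm f * v) / (supNorm f ^ 2 * D ^ 2) := by
        gcongr
    _ = _ := by field_simp

theorem IsIntegrableLogConcave.exists_linearEquiv_mul_lintegral_fiberSup_le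
    (hf : IsIntegrableLogConcave f) (hk : 0 < k) (hkn : k < n) :
    ∃ (V : (Fin n → ℝ) ≃ₗ[ℝ] Eucl n) (d ε : ℝ), 0 < d ∧ 0 < ε ∧
      (∀ g : Eucl n → ℝ≥0∞, ∫⁻ w, g (V w) = ENNReal.ofReal d⁻¹ * ∫⁻ x, g x) ∧
      (∀ S : Finset (Fin n), S.card = k →
        ENNReal.ofReal ε * ∫⁻ y, fiberSup S.restrict (fun w ↦ ENNReal.ofReal (f (V w))) y ≤
          ∫⁻ w, ENNReal.ofReal (f (V w))) ∧
      ((∫ x, f x) / (supNorm f * d)) ^ (((n : ℝ) - k) / n) ≤ (16 * √n) ^ (n - k) * ε := by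
  have hn : (0 : ℝ) < n := Nat.cast_pos.mpr (by omega)
  have hnk : (0 : ℝ) < n - k := sub_pos.mpr (Nat.cast_lt.mpr hkn)
  have hI := hf.integral_pos
  have hM := hf.supNorm_pos
  obtain ⟨V, d, v, x, x', hd, hv, hVvol, hV, hx, hx', hvol⟩ :=
    hf.exists_linearEquiv_le_superlevel (c := 6 / 25) (by norm_num) (by norm_num)
  set t := ((n : ℝ) - k) / (2 * n) with ht
  have ht0 : 0 < t := by positivity
  have ht1 : t < 1 := by
    rw [ht, div_lt_one (by positivity)]
    linarith [(Nat.cast_nonneg k : (0 : ℝ) ≤ k)]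
  have ht' : t / (n - k : ℕ) = 1 / (2 * n) := by
    rw [ht, Nat.cast_sub hkn.le]
    field_simp
  refine ⟨V, d, (v / supNorm f) ^ t * ((1 - t) ^ k * (t / (n - k : ℕ)) ^ (n - k)), hd, ?_, hVvol,
    fun S hS ↦ ?_, ?_⟩
  · have := sub_pos.mpr ht1
    rw [ht']
    positivity
  · have hSc : Sᶜ.card = n - k := by rw [Finset.card_compl, Fintype.card_fin, hS]
    have hne : Sᶜ.Nonempty := Finset.card_pos.mp (by omega)
    simpa only [hS, hSc] using
      hf.lintegral_fiberSup_restrict_le_of_superlevel V hV hv.le hx hx' hne ht0 ht1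
  · refine (rpow_le_of_factorial_mul_sq_le hk hkn (by positivity) (by positivity) hvol).trans_eq ?_
    have hconst : 8 / √n = 16 * √n * (1 / (2 * n)) := by
      nth_rw 3 [← Real.sq_sqrt hn.le]
      field_simp
      norm_num
    rw [ht', hconst, mul_pow]
    ring

theorem IsIntegrableLogConcave.exists_linearEquiv_lintegral_fiberSup_le
    (hf : IsIntegrableLogConcave f) (hk : 0 < k) (hkn : k < n) :
    ∃ (V : (Fin n → ℝ) ≃ₗ[ℝ] Eucl n) (d T : ℝ), 0 < d ∧ 0 ≤ T ∧
      (∀ g : Eucl n → ℝ≥0∞, ∫⁻ w, g (V w) = ENNReal.ofReal d⁻¹ * ∫⁻ x, g x) ∧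
      (∀ S : Finset (Fin n), S.card = k →
        ∫⁻ y, fiberSup S.restrict (fun w ↦ ENNReal.ofReal (f (V w))) y ≤ ENNReal.ofReal T) ∧
      d ^ ((k : ℝ) / n) * T ≤
        (16 * √n) ^ (n - k) * (∫ x, f x) ^ ((k : ℝ) / n) * supNorm f ^ (((n : ℝ) - k) / n) := by
  obtain ⟨V, d, ε, hd, hε, hV, hle, hεd⟩ := hf.exists_linearEquiv_mul_lintegral_fiberSup_le hk hkn
  have hI := hf.integral_pos
  have hsum : (k : ℝ) / n + ((n : ℝ) - k) / n = 1 := by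
    have : (n : ℝ) ≠ 0 := Nat.cast_ne_zero.mpr (by omega)
    field_simp
    ring
  refine ⟨V, d, (∫ x, f x) / d / ε, hd, by positivity, hV, fun S hS ↦ ?_,
    rpow_mul_div_div_le_of_rpow_div_le hsum hd hε hI hf.supNorm_pos hεd⟩
  rw [ENNReal.ofReal_div_of_pos hε, ENNReal.le_div_iff_mul_le (by simp [hε]) (by simp), mul_comm,
    div_eq_inv_mul, ENNReal.ofReal_mul (by positivity), ← hf.lintegral_ofReal, ← hV]
  exact hle S hS

theorem IsIntegrableLogConcave.lpNorm_le_of_lintegral_fiberSup_le (hf : IsIntegrableLogConcave f)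
    (hk : 0 < k) (hkn : k ≤ n) {V : (Fin n → ℝ) ≃ₗ[ℝ] Eucl n} {d T : ℝ} (hd : 0 < d) (hT : 0 ≤ T)
    (hV : ∀ g : Eucl n → ℝ≥0∞, ∫⁻ w, g (V w) = ENNReal.ofReal d⁻¹ * ∫⁻ x, g x)
    (h : ∀ S : Finset (Fin n), S.card = k →
      ∫⁻ y, fiberSup S.restrict (fun w ↦ ENNReal.ofReal (f (V w))) y ≤ ENNReal.ofReal T) :
    lpNorm ((n : ℝ) / k) f ≤ d ^ ((k : ℝ) / n) * T := by
  have hn : (0 : ℝ) < n := Nat.cast_pos.mpr (by omega)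
  have hk' : (0 : ℝ) < k := Nat.cast_pos.mpr hk
  have hmeas (S : Finset (Fin n)) :
      AEMeasurable (fiberSup S.restrict fun w ↦ ENNReal.ofReal (f (V w))) :=
    aemeasurable_of_quasiconcaveOn volume (quasiconcaveOn_fiberSup
      (LinearMap.funLeft ℝ ℝ (Subtype.val : S → Fin n))
      (hf.quasiconcaveOn_ofReal_comp V.toLinearMap))
  have hLW : ∫⁻ w, ENNReal.ofReal (f (V w)) ^ ((n : ℝ) / k) ≤
      ENNReal.ofReal T ^ ((n : ℝ) / k) := by
    simpa only [Fintype.card_fin, volume_pi] using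
      lintegral_rpow_le_of_lintegral_fiberSup_restrict_le (μ := fun _ : Fin n ↦ volume) hk
        (by simpa using hkn) (fun S _ ↦ hmeas S) h
  have hpow : ∫ x, f x ^ ((n : ℝ) / k) ≤ d * T ^ ((n : ℝ) / k) := by
    rw [hV fun x ↦ ENNReal.ofReal (f x) ^ ((n : ℝ) / k), ENNReal.ofReal_inv_of_pos hd,
      ENNReal.inv_mul_le_iff (by simpa) ENNReal.ofReal_ne_top,
      ENNReal.ofReal_rpow_of_nonneg hT (by positivity), ← ENNReal.ofReal_mul hd.le] at hLW
    refine (Real.le_norm_self _).trans ((norm_integral_le_lintegral_norm _).trans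
      (ENNReal.toReal_le_of_le_ofReal (by positivity) (le_of_eq_of_le ?_ hLW)))
    congr 1
    ext x
    rw [Real.norm_of_nonneg (Real.rpow_nonneg (hf.nonneg x) _),
      ENNReal.ofReal_rpow_of_nonneg (hf.nonneg x) (by positivity)]
  have hint : 0 ≤ ∫ x, f x ^ ((n : ℝ) / k) :=
    integral_nonneg fun x ↦ Real.rpow_nonneg (hf.nonneg x) _
  calc lpNorm ((n : ℝ) / k) f
    _ ≤ (d * T ^ ((n : ℝ) / k)) ^ (1 / ((n : ℝ) / k)) := by
        rw [_root_.lpNorm]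
        gcongr
    _ = d ^ ((k : ℝ) / n) * T := by
        rw [one_div_div, Real.mul_rpow hd.le (by positivity), ← Real.rpow_mul hT,
          div_mul_div_cancel₀ hk'.ne', div_self hn.ne', Real.rpow_one]

theorem functional_shephard_general (hk : 0 < k) (hkn : k < n) {f₁ f₂ : Eucl n → ℝ}
    (hf₁ : IsIntegrableLogConcave f₁) (hf₂ : IsIntegrableLogConcave f₂)
    (hcond : ∀ H : Submodule ℝ (Eucl n), Module.finrank ℝ H = k → projL1 f₁ H ≤ projL1 f₂ H) :
    lpNorm ((n : ℝ) / k) f₁ ≤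
      (16 * √n) ^ (n - k) * (∫ x, f₂ x) ^ ((k : ℝ) / n) * supNorm f₂ ^ (((n : ℝ) - k) / n) := by
  obtain ⟨V, d, T, hd, hT, hV, hle, hbound⟩ := hf₂.exists_linearEquiv_lintegral_fiberSup_le hk hkn
  refine (hf₁.lpNorm_le_of_lintegral_fiberSup_le hk hkn.le hd hT hV fun S hS ↦ ?_).trans hbound
  calc ∫⁻ y, fiberSup S.restrict (fun w ↦ ENNReal.ofReal (f₁ (V w))) y
    _ ≤ ∫⁻ y, fiberSup S.restrict (fun w ↦ ENNReal.ofReal (f₂ (V w))) y :=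
        lintegral_fiberSup_restrict_le_of_projL1_le hf₁ hf₂ V S (hS ▸ hcond)
    _ ≤ ENNReal.ofReal T := hle S hS

end Assembly

/-- **The functional Shephard problem** (Theorem 4.5): if `f₁, f₂ ∈ Q₀ⁿ` satisfy
`‖P_H f₁‖_{L¹(H)} ≤ ‖P_H f₂‖_{L¹(H)}` for every `k`-dimensional subspace `H`, then
`‖f₁‖_{n/k} ≤ (16√n)^{n−k} · ‖f₂‖₁^{k/n} · ‖f₂‖_∞^{(n−k)/n}`. -/
theorem functional_shephard (n k : ℕ) (hn : 2 ≤ n) (hk1 : 1 ≤ k) (hk2 : k ≤ n - 1)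
    (f₁ f₂ : Eucl n → ℝ) (hf₁ : MemQ0 f₁) (hf₂ : MemQ0 f₂)
    (hcond : ∀ H : Submodule ℝ (Eucl n), Module.finrank ℝ H = k →
      projL1 f₁ H ≤ projL1 f₂ H) :
    lpNorm ((n : ℝ) / k) f₁ ≤
      (16 * Real.sqrt n) ^ (n - k) * (∫ x, f₂ x) ^ ((k : ℝ) / n) *
        supNorm f₂ ^ (((n : ℝ) - k) / n) :=
  functional_shephard_general hk1 (by omega) hf₁.isIntegrableLogConcave hf₂.isIntegrableLogConcave
    hcond
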